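/- arXiv:2601.10531 — 11 statements merged into one kernel-verified Lean document; each statement's English description precedes it below -/
import Mathlib

section
/- Let G = (V,E) be a finite DAG and let G' = (V',E') be a coarsening of G with surjection χ : V → V'. Then for all pairwise disjoint sets A', B', C' ⊆ V', if A' and B' are d-separated given C' in G', then χ⁻¹(A') and χ⁻¹(B') are d-separated given χ⁻¹(C') in G. -/
/-- There exists an active path (relative to the conditioning set `C`) between `a` and `b`
in the graph with directed-edge relation `E`; i.e. `a` and `b` are d-connected given `C`.
A path is a list of distinct nodes, of length at least 2, starting at `a` and ending at `b`,
with consecutive nodes joined by an edge in either direction; it is active relative to `C`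
(where `a, b ∉ C`) if every interior collider is in `C` or has a descendant in `C`, and
every interior non-collider is not in `C`. -/
def ActiveBetween {V : Type*} (E : V → V → Prop) (C : Set V) (a b : V) : Prop :=
  a ∉ C ∧ b ∉ C ∧
  ∃ p : List V,
    2 ≤ p.length ∧ p.Nodup ∧
    p.head? = some a ∧ p.getLast? = some b ∧
    (∀ i, ∀ h : i + 1 < p.length,
      E (p[i]'(by omega)) (p[i + 1]'h) ∨ E (p[i + 1]'h) (p[i]'(by omega))) ∧
    (∀ i, ∀ h : i + 2 < p.length,
      ((E (p[i]'(by omega)) (p[i + 1]'(by omega)) ∧ E (p[i + 2]'h) (p[i + 1]'(by omega))) →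
        ∃ c ∈ C, Relation.ReflTransGen E (p[i + 1]'(by omega)) c) ∧
      (¬ (E (p[i]'(by omega)) (p[i + 1]'(by omega)) ∧ E (p[i + 2]'h) (p[i + 1]'(by omega))) →
        p[i + 1]'(by omega) ∉ C))

/-- `A` and `B` are d-separated given `C`: no active path relative to `C`
between any `a ∈ A` and `b ∈ B`. -/
def DSep {V : Type*} (E : V → V → Prop) (C A B : Set V) : Prop :=
  ∀ a ∈ A, ∀ b ∈ B, ¬ ActiveBetween E C a b

/-- An active walk of length `n` in the reflexive closure of `E`, with explicit directions. -/
structure AWalk {V : Type*} (E : V → V → Prop) (C : Set V) (n : ℕ) (f : ℕ → V)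
    (d : ℕ → Prop) : Prop where
  fwd : ∀ i, i < n → d i → f i = f (i + 1) ∨ E (f i) (f (i + 1))
  bwd : ∀ i, i < n → ¬ d i → f i = f (i + 1) ∨ E (f (i + 1)) (f i)
  col : ∀ i, i + 1 < n → d i → ¬ d (i + 1) → ∃ c ∈ C, Relation.ReflTransGen E (f (i + 1)) c
  ncol : ∀ i, i + 1 < n → ¬ (d i ∧ ¬ d (i + 1)) → f (i + 1) ∉ C

theorem AWalk.desc {V : Type*} {E : V → V → Prop} {C : Set V} {n : ℕ} {f : ℕ → V}
    {d : ℕ → Prop} (w : AWalk E C n f d) (k : ℕ) : ∀ s, d s → ¬ d (s + k) → s + k < n →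
    ∃ c ∈ C, Relation.ReflTransGen E (f s) c := by
  induction k with
  | zero => intro s h1 h2; exact absurd h1 h2
  | succ k ih =>
    intro s h1 h2 h3
    have key : ∃ c ∈ C, Relation.ReflTransGen E (f (s + 1)) c := by
      by_cases h : d (s + 1)
      · refine ih (s + 1) h ?_ (by omega)
        rwa [show s + 1 + k = s + (k + 1) by omega]
      · exact w.col s (by omega) h1 h
    obtain ⟨c, hc, hr⟩ := key
    refine ⟨c, hc, ?_⟩
    rcases w.fwd s (by omega) h1 with h | h
    · rw [h]; exact hr
    · exact Relation.ReflTransGen.head h hr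

theorem AWalk.excise {V : Type*} {E : V → V → Prop} {C : Set V} {n : ℕ} {f : ℕ → V}
    {d : ℕ → Prop} (w : AWalk E C n f d) (s k : ℕ) (hk : 0 < k) (hn : s + k ≤ n)
    (hf : f s = f (s + k)) :
    AWalk E C (n - k) (fun i => if i ≤ s then f i else f (i + k))
      (fun i => if i < s then d i else d (i + k)) := by
  have hF : ∀ i, s ≤ i → (if i ≤ s then f i else f (i + k)) = f (i + k) := by
    intro i hi
    split_ifs with h
    · obtain rfl : i = s := by omega
      exact hf
    · rfl
  have e1 : ∀ i, i + 1 + k = i + k + 1 := fun i => by omega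
  constructor
  · intro i hi hd
    by_cases h : i < s
    · have h2 : i ≤ s := by omega
      have h3 : i + 1 ≤ s := by omega
      simp only [h, h2, h3, if_true] at hd ⊢
      exact w.fwd i (by omega) hd
    · simp only [h, if_false] at hd
      simp only [hF i (by omega), hF (i + 1) (by omega)]
      simp only [e1]
      exact w.fwd (i + k) (by omega) hd
  · intro i hi hd
    by_cases h : i < s
    · have h2 : i ≤ s := by omega
      have h3 : i + 1 ≤ s := by omega
      simp only [h, h2, h3, if_true] at hd ⊢
      exact w.bwd i (by omega) hd
    · simp only [h, if_false] at hd
      simp only [hF i (by omega), hF (i + 1) (by omega)]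
      simp only [e1]
      exact w.bwd (i + k) (by omega) hd
  · intro i hi hd hd'
    rcases lt_trichotomy (i + 1) s with h | h | h
    · have h2 : i < s := by omega
      have h3 : i + 1 ≤ s := by omega
      simp only [h, h2, h3, if_true] at hd hd' ⊢
      exact w.col i (by omega) hd hd'
    · subst h
      simp only [lt_irrefl, if_false, le_refl, if_true, Nat.lt_succ_self] at hd hd' ⊢
      by_cases h1 : d (i + 1)
      · exact w.desc k (i + 1) h1 hd' (by omega)
      · exact w.col i (by omega) hd h1
    · have h2 : ¬ i < s := by omega
      have h3 : ¬ i + 1 < s := by omega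
      simp only [h2, h3, if_false] at hd hd'
      simp only [hF (i + 1) (by omega)]
      simp only [e1] at hd' ⊢
      exact w.col (i + k) (by omega) hd hd'
  · intro i hi hd
    rcases lt_trichotomy (i + 1) s with h | h | h
    · have h2 : i < s := by omega
      have h3 : i + 1 ≤ s := by omega
      simp only [h, h2, h3, if_true] at hd ⊢
      exact w.ncol i (by omega) hd
    · subst h
      simp only [lt_irrefl, if_false, le_refl, if_true, Nat.lt_succ_self] at hd ⊢
      by_cases h1 : d i
      · have h2 : d (i + 1 + k) := by tauto
        rw [hf, e1]
        rw [e1] at h2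
        exact w.ncol (i + k) (by omega) (by tauto)
      · exact w.ncol i (by omega) (by tauto)
    · have h2 : ¬ i < s := by omega
      have h3 : ¬ i + 1 < s := by omega
      simp only [h2, h3, if_false] at hd
      simp only [hF (i + 1) (by omega)]
      simp only [e1] at hd ⊢
      exact w.ncol (i + k) (by omega) hd

theorem activeBetween_of_walk {V : Type*} {E : V → V → Prop} {C : Set V}
    (hacyc : ∀ v, ¬ Relation.TransGen E v v) {a b : V} (hab : a ≠ b) (ha : a ∉ C) (hb : b ∉ C)
    (h : ∃ n f d, AWalk E C n f d ∧ f 0 = a ∧ f n = b) : ActiveBetween E C a b := by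
  classical
  obtain ⟨f, d, w, h0, h1⟩ := Nat.find_spec h
  have hmin := fun m => Nat.find_min (H := h) (m := m)
  generalize Nat.find h = n at w h0 h1 hmin
  have hinj : ∀ s t, s < t → t ≤ n → f s ≠ f t := by
    intro s t hst htn he
    obtain ⟨k, rfl⟩ := Nat.exists_eq_add_of_lt hst
    rw [add_assoc] at he htn
    refine hmin (n - (k + 1)) (by omega) ⟨_, _, w.excise s (k + 1) (by omega) htn he, ?_, ?_⟩
    · simpa using h0
    · by_cases hs : n - (k + 1) ≤ s
      · have : s = n - (k + 1) := by omega
        simp only [hs, if_true]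
        rw [← this, he, ← h1]
        congr 1; omega
      · simp only [hs, if_false]
        rw [← h1]
        congr 1; omega
  have asym : ∀ x y, E x y → ¬ E y x := fun x y hxy hyx =>
    hacyc x ((Relation.TransGen.single hxy).tail hyx)
  have hn : 0 < n := by
    rcases Nat.eq_zero_or_pos n with rfl | h
    · exact absurd (h0.symm.trans h1) hab
    · exact h
  have hfw : ∀ i, i < n → (d i → E (f i) (f (i + 1))) := fun i hi hd =>
    (w.fwd i hi hd).resolve_left (hinj i (i + 1) (by omega) (by omega))
  have hbw : ∀ i, i < n → (¬ d i → E (f (i + 1)) (f i)) := fun i hi hd =>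
    (w.bwd i hi hd).resolve_left (hinj i (i + 1) (by omega) (by omega))
  refine ⟨ha, hb, (List.range (n + 1)).map f, by simp; omega, ?_, ?_, ?_, ?_, ?_⟩
  · refine List.Nodup.map_on ?_ List.nodup_range
    intro x hx y hy hxy
    simp only [List.mem_range] at hx hy
    by_contra hne
    rcases lt_or_gt_of_ne hne with h | h
    · exact hinj x y h (by omega) hxy
    · exact hinj y x h (by omega) hxy.symm
  · simp [List.range_succ_eq_map, h0]
  · simp [List.range_succ, h1]
  · intro i hi
    simp only [List.length_map, List.length_range] at hi
    simp only [List.getElem_map, List.getElem_range]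
    by_cases hd : d i
    · exact Or.inl (hfw i (by omega) hd)
    · exact Or.inr (hbw i (by omega) hd)
  · intro i hi
    simp only [List.length_map, List.length_range] at hi
    simp only [List.getElem_map, List.getElem_range]
    constructor
    · rintro ⟨e1, e2⟩
      refine w.col i (by omega) ?_ ?_
      · by_contra hd
        exact asym _ _ e1 (hbw i (by omega) hd)
      · intro hd
        exact asym _ _ e2 (hfw (i + 1) (by omega) hd)
    · intro hnc
      refine w.ncol i (by omega) ?_
      rintro ⟨d1, d2⟩
      exact hnc ⟨hfw i (by omega) d1, hbw (i + 1) (by omega) d2⟩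

/-- if `G' = (V', E')` is a coarsening of the finite DAG `G = (V, E)` with
surjection `χ`, then for all pairwise disjoint `A', B', C' ⊆ V'`, d-separation of `A'` and `B'`
given `C'` in `G'` implies d-separation of `χ⁻¹(A')` and `χ⁻¹(B')` given `χ⁻¹(C')` in `G`. -/
theorem coarsening_dseparation_pullback
    {V V' : Type*} [Fintype V] [Fintype V']
    (E : V → V → Prop) (E' : V' → V' → Prop)
    (hacyc : ∀ v, ¬ Relation.TransGen E v v)
    (hacyc' : ∀ x, ¬ Relation.TransGen E' x x)
    (χ : V → V') (hχ : Function.Surjective χ)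
    (hE' : ∀ x y, E' x y ↔ ∃ v w, E v w ∧ χ v ≠ χ w ∧ χ v = x ∧ χ w = y)
    (A' B' C' : Set V')
    (hAB : Disjoint A' B') (hAC : Disjoint A' C') (hBC : Disjoint B' C')
    (hsep : DSep E' C' A' B') :
    DSep E (χ ⁻¹' C') (χ ⁻¹' A') (χ ⁻¹' B') := by
  rintro a ha b hb ⟨haC, hbC, p, hlen, -, hhd, hlast, hadj, hact⟩
  have asym : ∀ x y, E x y → ¬ E y x := fun x y hxy hyx =>
    hacyc x ((Relation.TransGen.single hxy).tail hyx)
  have hstep : ∀ x y, E x y → χ x = χ y ∨ E' (χ x) (χ y) := by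
    intro x y hxy
    by_cases h : χ x = χ y
    · exact Or.inl h
    · exact Or.inr ((hE' _ _).2 ⟨x, y, hxy, h, rfl, rfl⟩)
  have hreach : ∀ x y, Relation.ReflTransGen E x y → Relation.ReflTransGen E' (χ x) (χ y) := by
    intro x y h
    induction h with
    | refl => exact Relation.ReflTransGen.refl
    | tail _ h2 ih =>
      rcases hstep _ _ h2 with h | h
      · rwa [← h]
      · exact ih.tail h
  have hne : χ a ≠ χ b := fun h => Set.disjoint_left.1 hAB ha (by rw [h]; exact hb)
  refine hsep (χ a) ha (χ b) hb (activeBetween_of_walk hacyc' hne haC hbC ?_)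
  have hget : ∀ i (h : i < p.length), p.getD i a = p[i] := fun i h => by simp [h]
  refine ⟨p.length - 1, fun i => χ (p.getD i a), fun i => E (p.getD i a) (p.getD (i + 1) a),
    ⟨?_, ?_, ?_, ?_⟩, ?_, ?_⟩
  · intro i hi hd
    exact hstep _ _ hd
  · intro i hi hd
    have := hadj i (by omega)
    rw [← hget i (by omega), ← hget (i + 1) (by omega)] at this
    exact (hstep _ _ (this.resolve_left hd)).imp Eq.symm id
  · intro i hi hd hd'
    have h1 := hadj (i + 1) (by omega)
    have h2 := (hact i (by omega)).1
    rw [← hget (i + 1) (by omega), ← hget (i + 1 + 1) (by omega)] at h1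
    rw [← hget i (by omega), ← hget (i + 1) (by omega), ← hget (i + 2) (by omega)] at h2
    obtain ⟨c, hc, hr⟩ := h2 ⟨hd, h1.resolve_left hd'⟩
    exact ⟨χ c, hc, hreach _ _ hr⟩
  · intro i hi hd
    have h2 := (hact i (by omega)).2
    rw [← hget i (by omega), ← hget (i + 1) (by omega), ← hget (i + 2) (by omega)] at h2
    exact h2 fun ⟨e1, e2⟩ => hd ⟨e1, asym _ _ e2⟩
  · simp only
    rw [hget 0 (by omega)]
    rw [List.head?_eq_getElem?, List.getElem?_eq_getElem (by omega)] at hhd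
    rw [Option.some.inj hhd]
  · simp only
    rw [hget _ (by omega)]
    rw [List.getLast?_eq_getElem?, List.getElem?_eq_getElem (by omega)] at hlast
    rw [Option.some.inj hlast]
end

section
/- Let G = (V,E) be a finite DAG, let G' = (V',E') be a coarsening of G with surjection χ : V → V', and let C' ⊆ V' with C = χ⁻¹(C'). If a, b ∈ V are d-connected given C in G (i.e., there exists a path between a and b active relative to C), and χ(a) ≠ χ(b) with χ(a), χ(b) ∉ C', then χ(a) and χ(b) are d-connected given C' in G'. -/
def AncOf {V : Type*} (E : V → V → Prop) (C : Set V) (u : V) : Prop :=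
  ∃ c ∈ C, Relation.ReflTransGen E u c

/-- Active walks starting at `a`; the flag says whether the last edge points into the endpoint. -/
inductive AWalk_s1 {V : Type*} (E : V → V → Prop) (C : Set V) (a : V) : V → Bool → Prop
  | start : AWalk_s1 E C a a false
  | fwd {u w d} : AWalk_s1 E C a u d → E u w → u ∉ C → AWalk_s1 E C a w true
  | back {u w d} : AWalk_s1 E C a u d → E w u → (d = true → AncOf E C u) → (d = false → u ∉ C) →
      AWalk_s1 E C a w false

/-- Active paths starting at `a`, listed from the current endpoint back to `a`. -/
inductive APath {V : Type*} (E : V → V → Prop) (C : Set V) (a : V) : List V → Bool → Prop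
  | start : APath E C a [a] false
  | fwd {u w l d} : APath E C a (u :: l) d → E u w → u ∉ C → w ∉ u :: l →
      APath E C a (w :: u :: l) true
  | back {u w l d} : APath E C a (u :: l) d → E w u → (d = true → AncOf E C u) →
      (d = false → u ∉ C) → w ∉ u :: l → APath E C a (w :: u :: l) false

theorem AncOf.step {V : Type*} {E : V → V → Prop} {C : Set V} {u w : V}
    (h : Relation.ReflTransGen E w u) : AncOf E C u → AncOf E C w := by
  rintro ⟨c, hc, hr⟩
  exact ⟨c, hc, h.trans hr⟩

/-- Truncating an active path. -/
theorem APath.trunc {V : Type*} {E : V → V → Prop} {C : Set V} {a : V} {q : List V} {d : Bool}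
    (h : APath E C a q d) : ∀ u l, q = u :: l → ∀ w ∈ q, ∃ l' d', APath E C a (w :: l') d' ∧
      (w = u → d' = d) ∧ (d' = false → w ≠ u → w ∉ C) ∧
      (d' = true → AncOf E C w ∨ (Relation.ReflTransGen E w u ∧ d = true)) := by
  induction h with
  | start =>
    intro u l hq w hw
    simp at hq hw
    obtain ⟨rfl, rfl⟩ := hq
    subst hw
    exact ⟨[], false, .start, by simp, by simp, by simp⟩
  | @fwd u w' l d h hE hu hn ih =>
    intro u' l' hq w hw
    simp only [List.cons.injEq] at hq
    obtain ⟨rfl, rfl⟩ := hq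
    by_cases hww : w = w'
    · subst hww
      exact ⟨_, _, .fwd h hE hu hn, by simp, by simp, fun _ => .inr ⟨.refl, rfl⟩⟩
    · have hw2 : w ∈ u :: l := (List.mem_cons.1 hw).resolve_left hww
      obtain ⟨l', d', hp, h1, h2, h3⟩ := ih u l rfl w hw2
      refine ⟨l', d', hp, fun h => (hww h).elim, fun hd _ => ?_, fun hd => ?_⟩
      · by_cases hwu : w = u
        · rwa [hwu]
        · exact h2 hd hwu
      · rcases h3 hd with h | ⟨h, _⟩
        · exact .inl h
        · exact .inr ⟨h.tail hE, rfl⟩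
  | @back u w' l d h hE hA hu hn ih =>
    intro u' l' hq w hw
    simp only [List.cons.injEq] at hq
    obtain ⟨rfl, rfl⟩ := hq
    by_cases hww : w = w'
    · subst hww
      exact ⟨_, _, .back h hE hA hu hn, by simp, by simp, by simp⟩
    · have hw2 : w ∈ u :: l := (List.mem_cons.1 hw).resolve_left hww
      obtain ⟨l', d', hp, h1, h2, h3⟩ := ih u l rfl w hw2
      refine ⟨l', d', hp, fun h => (hww h).elim, fun hd _ => ?_, fun hd => ?_⟩
      · by_cases hwu : w = u
        · rw [hwu]
          exact hu (by rw [← h1 hwu, hd])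
        · exact h2 hd hwu
      · rcases h3 hd with h | ⟨h, hd'⟩
        · exact .inl h
        · exact .inl (AncOf.step h (hA hd'))

theorem AWalk_s1.toPath {V : Type*} {E : V → V → Prop} {C : Set V} {a u : V} {d : Bool}
    (hacyc : ∀ v, ¬ Relation.TransGen E v v)
    (h : AWalk_s1 E C a u d) : ∃ l d', APath E C a (u :: l) d' ∧
      (d = false → d' = true → AncOf E C u) ∧ (d = true → d' = false → u ∉ C) := by
  induction h with
  | start => exact ⟨[], false, .start, by simp, by simp⟩
  | @fwd u w d h hE hu ih =>
    obtain ⟨l, d0, hp, h1, h2⟩ := ih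
    by_cases hw : w ∈ u :: l
    · obtain ⟨l', d', hp', t1, t2, t3⟩ := hp.trunc u l rfl w hw
      refine ⟨l', d', hp', by simp, fun _ hd => t2 hd ?_⟩
      rintro rfl
      exact hacyc _ (.single hE)
    · exact ⟨_, _, .fwd hp hE hu hw, by simp, by simp⟩
  | @back u w d h hE hA hu ih =>
    obtain ⟨l, d0, hp, h1, h2⟩ := ih
    have hA0 : d0 = true → AncOf E C u := by
      intro h0
      cases d
      · exact h1 rfl h0
      · exact hA rfl
    have hu0 : d0 = false → u ∉ C := by
      intro h0
      cases d
      · exact hu rfl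
      · exact h2 rfl h0
    by_cases hw : w ∈ u :: l
    · obtain ⟨l', d', hp', t1, t2, t3⟩ := hp.trunc u l rfl w hw
      refine ⟨l', d', hp', fun _ hd => ?_, by simp⟩
      rcases t3 hd with h | ⟨_, h0⟩
      · exact h
      · exact AncOf.step (.single hE) (hA0 h0)
    · exact ⟨_, _, .back hp hE hA0 hu0 hw, by simp, by simp⟩

theorem APath.spec {V : Type*} {E : V → V → Prop} {C : Set V} {a : V} {p : List V} {d : Bool}
    (hacyc : ∀ v, ¬ Relation.TransGen E v v)
    (h : APath E C a p d) : p.Nodup ∧ p.getLast? = some a ∧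
    (∀ h : 1 < p.length, (d = true → E p[1] p[0]) ∧ (d = false → E p[0] p[1])) ∧
    (∀ i, ∀ h : i + 1 < p.length,
      E (p[i]'(by omega)) (p[i + 1]'h) ∨ E (p[i + 1]'h) (p[i]'(by omega))) ∧
    (∀ i, ∀ h : i + 2 < p.length,
      ((E (p[i]'(by omega)) (p[i + 1]'(by omega)) ∧ E (p[i + 2]'h) (p[i + 1]'(by omega))) →
        ∃ c ∈ C, Relation.ReflTransGen E (p[i + 1]'(by omega)) c) ∧
      (¬ (E (p[i]'(by omega)) (p[i + 1]'(by omega)) ∧ E (p[i + 2]'h) (p[i + 1]'(by omega))) →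
        p[i + 1]'(by omega) ∉ C)) := by
  have asym : ∀ x y, E x y → ¬ E y x := fun x y h1 h2 => hacyc x ((Relation.TransGen.single h1).tail h2)
  induction h with
  | start => simp
  | @fwd u w l d h hE hu hn ih =>
    obtain ⟨i1, i2, i3, i4, i5⟩ := ih
    refine ⟨List.nodup_cons.2 ⟨hn, i1⟩, by simpa using i2, by simpa using hE, ?_, ?_⟩
    · rintro (_ | i) hi
      · right; simpa using hE
      · exact i4 i (by simpa using hi)
    · rintro (_ | i) hi
      · exact ⟨fun hc => (asym _ _ hE hc.1).elim, fun _ => hu⟩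
      · exact i5 i (by simpa using hi)
  | @back u w l d h hE hA hu hn ih =>
    obtain ⟨i1, i2, i3, i4, i5⟩ := ih
    refine ⟨List.nodup_cons.2 ⟨hn, i1⟩, by simpa using i2, by simpa using hE, ?_, ?_⟩
    · rintro (_ | i) hi
      · left; simpa using hE
      · exact i4 i (by simpa using hi)
    · rintro (_ | i) hi
      · have i3' := i3 (by simpa using hi)
        cases d
        · exact ⟨fun hc => (asym _ _ hc.2 (i3'.2 rfl)).elim, fun _ => hu rfl⟩
        · exact ⟨fun _ => hA rfl, fun hc => (hc ⟨hE, i3'.1 rfl⟩).elim⟩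
      · exact i5 i (by simpa using hi)

theorem AWalk_s1.ofList {V : Type*} {E : V → V → Prop} {C : Set V} {b : V}
    (hb : b ∉ C) : ∀ (l : List V) (x y : V),
    (x :: y :: l).getLast? = some b →
    (∀ i, ∀ h : i + 1 < (x :: y :: l).length,
      E ((x :: y :: l)[i]'(by omega)) ((x :: y :: l)[i + 1]'h) ∨
      E ((x :: y :: l)[i + 1]'h) ((x :: y :: l)[i]'(by omega))) →
    (∀ i, ∀ h : i + 2 < (x :: y :: l).length,
      ((E ((x :: y :: l)[i]'(by omega)) ((x :: y :: l)[i + 1]'(by omega)) ∧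
          E ((x :: y :: l)[i + 2]'h) ((x :: y :: l)[i + 1]'(by omega))) →
        ∃ c ∈ C, Relation.ReflTransGen E ((x :: y :: l)[i + 1]'(by omega)) c) ∧
      (¬ (E ((x :: y :: l)[i]'(by omega)) ((x :: y :: l)[i + 1]'(by omega)) ∧
          E ((x :: y :: l)[i + 2]'h) ((x :: y :: l)[i + 1]'(by omega))) →
        (x :: y :: l)[i + 1]'(by omega) ∉ C)) →
    (∀ x y, E x y → ¬ E y x) →
    ∃ d, AWalk_s1 E C b x d ∧ (d = true ↔ E y x) := by
  intro l
  induction l with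
  | nil =>
    intro x y hl h1 _ asym
    have hy : y = b := by simpa using hl
    subst hy
    rcases h1 0 (by simp) with h | h
    · exact ⟨false, .back .start h (by simp) (fun _ => hb), by simpa using asym _ _ h⟩
    · exact ⟨true, .fwd .start h hb, by simpa using h⟩
  | cons z l ih =>
    intro x y hl h1 h2 asym
    obtain ⟨d, hw, hd⟩ := ih y z (by simpa using hl)
      (fun i hi => h1 (i + 1) (by simpa using hi))
      (fun i hi => h2 (i + 1) (by simpa using hi)) asym
    obtain ⟨c1, c2⟩ := h2 0 (by simp)
    simp only [List.getElem_cons_zero, List.getElem_cons_succ, zero_add] at c1 c2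
    rcases h1 0 (by simp) with h | h
    · simp only [List.getElem_cons_zero, List.getElem_cons_succ, zero_add] at h
      refine ⟨false, .back hw h (fun h' => c1 ⟨h, hd.1 h'⟩) (fun h' => c2 ?_),
        by simpa using asym _ _ h⟩
      rintro ⟨_, h3⟩
      simp [hd.2 h3] at h'
    · simp only [List.getElem_cons_zero, List.getElem_cons_succ, zero_add] at h
      exact ⟨true, .fwd hw h (c2 fun hc => asym _ _ h hc.1), by simpa using h⟩

theorem AWalk_s1.push {V V' : Type*} {E : V → V → Prop} {E' : V' → V' → Prop} {χ : V → V'}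
    (hE' : ∀ v w, E v w → χ v ≠ χ w → E' (χ v) (χ w))
    {C' : Set V'} {a u : V} {d : Bool} (h : AWalk_s1 E (χ ⁻¹' C') a u d) :
    ∃ d', AWalk_s1 E' C' (χ a) (χ u) d' ∧
      (d = false → d' = true → AncOf E' C' (χ u)) ∧ (d = true → d' = false → χ u ∉ C') := by
  have hanc : ∀ u, AncOf E (χ ⁻¹' C') u → AncOf E' C' (χ u) := by
    rintro u ⟨c, hc, hr⟩
    refine ⟨χ c, hc, ?_⟩
    clear hc
    induction hr with
    | refl => exact .refl
    | @tail p q _ hpq ih2 =>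
      by_cases heq : χ p = χ q
      · rwa [← heq]
      · exact ih2.tail (hE' _ _ hpq heq)
  induction h with
  | start => exact ⟨false, .start, by simp, by simp⟩
  | @fwd u w d h hE hu ih =>
    obtain ⟨d0, hp, h1, h2⟩ := ih
    by_cases heq : χ u = χ w
    · rw [← heq]
      exact ⟨d0, hp, by simp, fun _ _ => hu⟩
    · exact ⟨true, .fwd hp (hE' _ _ hE heq) hu, by simp, by simp⟩
  | @back u w d h hE hA hu ih =>
    obtain ⟨d0, hp, h1, h2⟩ := ih
    have hA0 : d0 = true → AncOf E' C' (χ u) := by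
      intro h0
      cases d
      · exact h1 rfl h0
      · exact hanc _ (hA rfl)
    have hu0 : d0 = false → χ u ∉ C' := by
      intro h0
      cases d
      · exact hu rfl
      · exact h2 rfl h0
    by_cases heq : χ w = χ u
    · rw [heq]
      exact ⟨d0, hp, fun _ => hA0, by simp⟩
    · exact ⟨false, .back hp (hE' _ _ hE heq) hA0 hu0, by simp, by simp⟩

/-- if `G'` is a coarsening of the finite DAG `G` with surjection `χ`, `C' ⊆ V'`
and `C = χ⁻¹(C')`, then d-connection of `a` and `b` given `C` in `G` implies d-connection of
`χ(a)` and `χ(b)` given `C'` in `G'`, provided `χ(a) ≠ χ(b)` and `χ(a), χ(b) ∉ C'`. -/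
theorem coarsening_dconnection_pushforward
    {V V' : Type*} [Fintype V] [Fintype V']
    (E : V → V → Prop) (E' : V' → V' → Prop)
    (hacyc : ∀ v, ¬ Relation.TransGen E v v)
    (hacyc' : ∀ x, ¬ Relation.TransGen E' x x)
    (χ : V → V') (hχ : Function.Surjective χ)
    (hE' : ∀ x y, E' x y ↔ ∃ v w, E v w ∧ χ v ≠ χ w ∧ χ v = x ∧ χ w = y)
    (C' : Set V') (a b : V)
    (hcon : ActiveBetween E (χ ⁻¹' C') a b)
    (hab : χ a ≠ χ b) (haC : χ a ∉ C') (hbC : χ b ∉ C') :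
    ActiveBetween E' C' (χ a) (χ b) := by
  obtain ⟨_, hb, p, hlen, _, hhead, hlast, h1, h2⟩ := hcon
  have asym : ∀ x y, E x y → ¬ E y x :=
    fun x y h1 h2 => hacyc x ((Relation.TransGen.single h1).tail h2)
  match p, hlen, hhead, hlast, h1, h2 with
  | x :: y :: l, _, hhead, hlast, h1, h2 =>
    have hx : x = a := by simpa using hhead
    subst hx
    obtain ⟨d, hw, _⟩ := AWalk_s1.ofList hb l x y hlast h1 h2 asym
    obtain ⟨d', hw', _⟩ := hw.push (E' := E') (fun v w h hne => (hE' _ _).2 ⟨v, w, h, hne, rfl, rfl⟩)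
    obtain ⟨q, d'', hq, _⟩ := hw'.toPath hacyc'
    obtain ⟨s1, s2, _, s4, s5⟩ := hq.spec hacyc'
    refine ⟨haC, hbC, χ x :: q, ?_, s1, rfl, s2, s4, s5⟩
    cases q with
    | nil => exact absurd (by simpa using s2) hab
    | cons => simp
end

section
/- Let G = (V,E) be a finite DAG and let Π_A and Π_B be valid coarsening partitions of G. Then the partition of V whose parts are the nonempty intersections U ∩ W with U ∈ Π_A and W ∈ Π_B (the common refinement, i.e., the meet of Π_A and Π_B in the partition refinement lattice) is also a valid coarsening partition of G. -/
/-- The quotient-graph edge relation induced by `E` on the parts of `P`. -/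
def QuotRel {V : Type*} (E : V → V → Prop) (P : Set (Set V)) (π ρ : Set V) : Prop :=
  π ∈ P ∧ ρ ∈ P ∧ π ≠ ρ ∧ ∃ v ∈ π, ∃ w ∈ ρ, E v w

/-- `P` is a valid coarsening partition of the DAG with edges `E`:
a partition of `V` whose quotient graph is acyclic. -/
def ValidCoarsening {V : Type*} (E : V → V → Prop) (P : Set (Set V)) : Prop :=
  Setoid.IsPartition P ∧ ∀ π, ¬ Relation.TransGen (QuotRel E P) π π

/-- `P` refines `Q`: every part of `P` is contained in some part of `Q`. -/
def Refines {V : Type*} (P Q : Set (Set V)) : Prop :=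
  ∀ π ∈ P, ∃ ρ ∈ Q, π ⊆ ρ

/-- The common refinement of two partitions: the nonempty intersections of their parts. -/
def CommonRefinement {V : Type*} (P Q : Set (Set V)) : Set (Set V) :=
  {s | s.Nonempty ∧ ∃ U ∈ P, ∃ W ∈ Q, s = U ∩ W}

theorem part_eq {V : Type*} {P : Set (Set V)} (hP : Setoid.IsPartition P) {U U' : Set V}
    (hU : U ∈ P) (hU' : U' ∈ P) {x : V} (h : x ∈ U) (h' : x ∈ U') : U = U' :=
  (hP.2 x).unique ⟨hU, h⟩ ⟨hU', h'⟩

theorem path_lift {V : Type*} {E : V → V → Prop} {C P : Set (Set V)}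
    (hP : Setoid.IsPartition P) (hC : Refines C P) {s t : Set V}
    (h : Relation.ReflTransGen (QuotRel E C) s t) (hs : s.Nonempty)
    {U : Set V} (hU : U ∈ P) (hsU : s ⊆ U) :
    ∀ U' ∈ P, t ⊆ U' → Relation.ReflTransGen (QuotRel E P) U U' := by
  induction h with
  | refl =>
    intro U' hU' hsU'
    obtain ⟨x, hx⟩ := hs
    rw [part_eq hP hU hU' (hsU hx) (hsU' hx)]
  | tail _ hbc ih =>
    intro U' hU' htU'
    obtain ⟨hb, _, _, v, hv, w, hw, hE⟩ := hbc
    obtain ⟨M, hM, hbM⟩ := hC _ hb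
    have h1 := ih M hM hbM
    by_cases he : M = U'
    · exact he ▸ h1
    · exact h1.tail ⟨hM, hU', he, v, hbM hv, w, htU' hw, hE⟩

/-- the common refinement (lattice meet) of two valid coarsening partitions
of a finite DAG is again a valid coarsening partition. -/
theorem commonRefinement_validCoarsening
    {V : Type*} [Fintype V] (E : V → V → Prop)
    (hacyc : ∀ v, ¬ Relation.TransGen E v v)
    (PA PB : Set (Set V))
    (hA : ValidCoarsening E PA) (hB : ValidCoarsening E PB) :
    ValidCoarsening E (CommonRefinement PA PB) := by
  obtain ⟨pA, aA⟩ := hA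
  obtain ⟨pB, aB⟩ := hB
  refine ⟨⟨fun h => Set.not_nonempty_empty h.1, fun x => ?_⟩, ?_⟩
  · obtain ⟨U, ⟨hU, hxU⟩, -⟩ := pA.2 x
    obtain ⟨W, ⟨hW, hxW⟩, -⟩ := pB.2 x
    refine ⟨U ∩ W, ⟨⟨⟨x, hxU, hxW⟩, U, hU, W, hW, rfl⟩, hxU, hxW⟩, ?_⟩
    rintro _ ⟨⟨-, U', hU', W', hW', rfl⟩, hx1, hx2⟩
    rw [part_eq pA hU hU' hxU hx1, part_eq pB hW hW' hxW hx2]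
  · intro s hs
    have rA : Refines (CommonRefinement PA PB) PA := by
      rintro _ ⟨-, U, hU, W, hW, rfl⟩
      exact ⟨U, hU, Set.inter_subset_left⟩
    have rB : Refines (CommonRefinement PA PB) PB := by
      rintro _ ⟨-, U, hU, W, hW, rfl⟩
      exact ⟨W, hW, Set.inter_subset_right⟩
    obtain ⟨t, hst, hts⟩ := Relation.TransGen.head'_iff.1 hs
    obtain ⟨⟨-, U, hU, W, hW, rfl⟩, ⟨ht, U', hU', W', hW', rfl⟩, hne, v, hv, w, hw, hE⟩ := hst
    have hA := path_lift pA rA hts ht hU' Set.inter_subset_left U hU Set.inter_subset_left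
    have hB := path_lift pB rB hts ht hW' Set.inter_subset_right W hW Set.inter_subset_right
    by_cases hUU : U = U'
    · by_cases hWW : W = W'
      · exact hne (by rw [hUU, hWW])
      · exact aB W (Relation.TransGen.head' ⟨hW, hW', hWW, v, hv.2, w, hw.2, hE⟩ hB)
    · exact aA U (Relation.TransGen.head' ⟨hU, hU', hUU, v, hv.1, w, hw.1, hE⟩ hA)
end

section
/- Let G = (V,E) be a finite DAG. The set of valid coarsening partitions of G, ordered by refinement, is a lattice: the meet of two valid coarsening partitions is their common refinement (their meet in the partition refinement lattice), and the one-part partition {V} is the top element. -/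
def SameP {V : Type*} (P : Set (Set V)) (x y : V) : Prop := ∃ p ∈ P, x ∈ p ∧ y ∈ p

theorem SameP.part_eq {V : Type*} {P : Set (Set V)} (hP : Setoid.IsPartition P) {p q : Set V}
    (hp : p ∈ P) (hq : q ∈ P) {x : V} (hxp : x ∈ p) (hxq : x ∈ q) : p = q :=
  (hP.2 x).unique ⟨hp, hxp⟩ ⟨hq, hxq⟩

theorem nonempty_part {V : Type*} {P : Set (Set V)} (hP : Setoid.IsPartition P) {p : Set V}
    (hp : p ∈ P) : p.Nonempty := by
  rw [Set.nonempty_iff_ne_empty]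
  rintro rfl
  exact hP.1 hp

theorem SameP.refl {V : Type*} {P : Set (Set V)} (hP : Setoid.IsPartition P) (x : V) :
    SameP P x x := by
  obtain ⟨p, ⟨hp, hx⟩, -⟩ := hP.2 x
  exact ⟨p, hp, hx, hx⟩

theorem SameP.symm {V : Type*} {P : Set (Set V)} {x y : V} (h : SameP P x y) : SameP P y x := by
  obtain ⟨p, hp, hx, hy⟩ := h
  exact ⟨p, hp, hy, hx⟩

theorem SameP.trans {V : Type*} {P : Set (Set V)} (hP : Setoid.IsPartition P) {x y z : V}
    (h : SameP P x y) (h' : SameP P y z) : SameP P x z := by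
  obtain ⟨p, hp, hx, hy⟩ := h
  obtain ⟨q, hq, hy', hz⟩ := h'
  obtain rfl := SameP.part_eq hP hp hq hy hy'
  exact ⟨p, hp, hx, hz⟩

/-- One step: move inside a part or along an edge. -/
def StepP {V : Type*} (E : V → V → Prop) (P : Set (Set V)) (x y : V) : Prop :=
  SameP P x y ∨ E x y

theorem reach_parts {V : Type*} {E : V → V → Prop} {P : Set (Set V)} (hP : Setoid.IsPartition P)
    {x y : V} (h : Relation.ReflTransGen (StepP E P) x y) :
    ∀ p ∈ P, ∀ q ∈ P, x ∈ p → y ∈ q → Relation.ReflTransGen (QuotRel E P) p q := by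
  intro p hp
  induction h with
  | refl =>
    intro q hq hx hy
    rw [SameP.part_eq hP hp hq hx hy]
  | @tail b c _ hbc ih =>
    intro q hq hx hy
    obtain ⟨m, ⟨hm, hb⟩, -⟩ := hP.2 b
    have h1 := ih m hm hx hb
    by_cases hmq : m = q
    · exact hmq ▸ h1
    rcases hbc with ⟨r, hr, hbr, hcr⟩ | hE
    · exact absurd ((SameP.part_eq hP hm hr hb hbr).trans (SameP.part_eq hP hr hq hcr hy)) hmq
    · exact h1.tail ⟨hm, hq, hmq, b, hb, c, hy, hE⟩

theorem reach_points {V : Type*} {E : V → V → Prop} {P : Set (Set V)}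
    {p q : Set V} (hp : p ∈ P) (h : Relation.ReflTransGen (QuotRel E P) p q) :
    ∀ x ∈ p, ∀ y ∈ q, Relation.ReflTransGen (StepP E P) x y := by
  induction h with
  | refl =>
    intro x hx y hy
    exact Relation.ReflTransGen.single (Or.inl ⟨p, hp, hx, hy⟩)
  | @tail b c _ hbc ih =>
    intro x hx y hy
    obtain ⟨hb, hc, -, v, hv, w, hw, hE⟩ := hbc
    exact ((ih x hx v hv).tail (Or.inr hE)).tail (Or.inl ⟨c, hc, hw, hy⟩)

theorem valid_iff {V : Type*} {E : V → V → Prop} {P : Set (Set V)} :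
    ValidCoarsening E P ↔ Setoid.IsPartition P ∧ ∀ x y,
      Relation.ReflTransGen (StepP E P) x y → Relation.ReflTransGen (StepP E P) y x →
        SameP P x y := by
  refine and_congr_right fun hP => ⟨fun h x y hxy hyx => ?_, fun h π hπ => ?_⟩
  · obtain ⟨p, ⟨hp, hx⟩, -⟩ := hP.2 x
    obtain ⟨q, ⟨hq, hy⟩, -⟩ := hP.2 y
    have h1 := reach_parts hP hxy p hp q hq hx hy
    have h2 := reach_parts hP hyx q hq p hp hy hx
    rcases Relation.reflTransGen_iff_eq_or_transGen.1 h1 with h3 | h3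
    · exact ⟨p, hp, hx, h3 ▸ hy⟩
    · exact absurd (h3.trans_left h2) (h p)
  · obtain ⟨ρ, ⟨h1, h2, h3, v, hv, w, hw, hE⟩, hρ⟩ := Relation.TransGen.head'_iff.1 hπ
    obtain ⟨r, hr, hvr, hwr⟩ := h v w (Relation.ReflTransGen.single (Or.inr hE))
      (reach_points h2 hρ w hw v hv)
    exact h3 ((SameP.part_eq hP h1 hr hv hvr).trans (SameP.part_eq hP hr h2 hwr hw))

theorem refines_iff {V : Type*} {P Q : Set (Set V)} (hP : Setoid.IsPartition P)
    (hQ : Setoid.IsPartition Q) :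
    Refines P Q ↔ ∀ x y, SameP P x y → SameP Q x y := by
  constructor
  · rintro h x y ⟨p, hp, hx, hy⟩
    obtain ⟨q, hq, hpq⟩ := h p hp
    exact ⟨q, hq, hpq hx, hpq hy⟩
  · intro h p hp
    obtain ⟨x, hx⟩ := nonempty_part hP hp
    obtain ⟨q, ⟨hq, hxq⟩, -⟩ := hQ.2 x
    refine ⟨q, hq, fun y hy => ?_⟩
    obtain ⟨r, hr, hxr, hyr⟩ := h x y ⟨p, hp, hx, hy⟩
    rwa [SameP.part_eq hQ hq hr hxq hxr]

theorem valid_of_inf {V : Type*} {E : V → V → Prop} {M : Set (Set V)} (F : Set (Set (Set V)))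
    (hM : Setoid.IsPartition M) (hF : ∀ Q ∈ F, ValidCoarsening E Q)
    (h : ∀ x y, SameP M x y ↔ ∀ Q ∈ F, SameP Q x y) : ValidCoarsening E M := by
  refine valid_iff.2 ⟨hM, fun x y hxy hyx => (h x y).2 fun Q hQ => ?_⟩
  have hs : ∀ a b, StepP E M a b → StepP E Q a b := fun a b hab =>
    hab.imp (fun k => (h a b).1 k Q hQ) id
  exact (valid_iff.1 (hF Q hQ)).2 x y (Relation.ReflTransGen.mono hs _ _ hxy)
    (Relation.ReflTransGen.mono hs _ _ hyx)

theorem same_common {V : Type*} {P Q : Set (Set V)} (x y : V) :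
    SameP (CommonRefinement P Q) x y ↔ SameP P x y ∧ SameP Q x y := by
  constructor
  · rintro ⟨s, ⟨-, U, hU, W, hW, rfl⟩, hx, hy⟩
    exact ⟨⟨U, hU, hx.1, hy.1⟩, ⟨W, hW, hx.2, hy.2⟩⟩
  · rintro ⟨⟨U, hU, hx, hy⟩, ⟨W, hW, hx', hy'⟩⟩
    exact ⟨U ∩ W, ⟨⟨x, hx, hx'⟩, U, hU, W, hW, rfl⟩, ⟨hx, hx'⟩, ⟨hy, hy'⟩⟩

theorem partition_common {V : Type*} {P Q : Set (Set V)} (hP : Setoid.IsPartition P)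
    (hQ : Setoid.IsPartition Q) : Setoid.IsPartition (CommonRefinement P Q) := by
  refine ⟨fun h => Set.not_nonempty_empty h.1, fun x => ?_⟩
  obtain ⟨U, ⟨hU, hx⟩, -⟩ := hP.2 x
  obtain ⟨W, ⟨hW, hx'⟩, -⟩ := hQ.2 x
  refine ⟨U ∩ W, ⟨⟨⟨x, hx, hx'⟩, U, hU, W, hW, rfl⟩, hx, hx'⟩, ?_⟩
  rintro s ⟨⟨-, U', hU', W', hW', rfl⟩, h1, h2⟩
  rw [SameP.part_eq hP hU hU' hx h1, SameP.part_eq hQ hW hW' hx' h2]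

theorem partition_univ {V : Type*} [Nonempty V] :
    Setoid.IsPartition ({Set.univ} : Set (Set V)) := by
  refine ⟨fun h => Set.empty_ne_univ h, fun x => ⟨Set.univ, ⟨rfl, trivial⟩, fun s hs => hs.1⟩⟩

/-- the set of valid coarsening partitions of a finite DAG, ordered by
refinement, is a lattice: the meet of two valid coarsening partitions is their common
refinement (their meet in the partition refinement lattice), joins exist, and the
one-part partition `{V}` is the top element. -/
theorem validCoarsenings_lattice
    {V : Type*} [Fintype V] [Nonempty V] (E : V → V → Prop)
    (hacyc : ∀ v, ¬ Relation.TransGen E v v) :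
    (∀ PA PB : Set (Set V), ValidCoarsening E PA → ValidCoarsening E PB →
      ValidCoarsening E (CommonRefinement PA PB) ∧
      Refines (CommonRefinement PA PB) PA ∧
      Refines (CommonRefinement PA PB) PB ∧
      ∀ Q, ValidCoarsening E Q → Refines Q PA → Refines Q PB →
        Refines Q (CommonRefinement PA PB)) ∧
    (∀ PA PB : Set (Set V), ValidCoarsening E PA → ValidCoarsening E PB →
      ∃ J, ValidCoarsening E J ∧ Refines PA J ∧ Refines PB J ∧
        ∀ Q, ValidCoarsening E Q → Refines PA Q → Refines PB Q → Refines J Q) ∧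
    ValidCoarsening E {Set.univ} ∧
    (∀ P, ValidCoarsening E P → Refines P {Set.univ}) := by
  refine ⟨fun PA PB hA hB => ?_, fun PA PB hA hB => ?_, ?_, ?_⟩
  · have hM := partition_common hA.1 hB.1
    refine ⟨valid_of_inf {PA, PB} hM ?_ ?_, ?_, ?_, ?_⟩
    · rintro Q (rfl | rfl)
      · exact hA
      · exact hB
    · intro x y
      rw [same_common]
      simp
    · exact (refines_iff hM hA.1).2 fun x y h => ((same_common x y).1 h).1
    · exact (refines_iff hM hB.1).2 fun x y h => ((same_common x y).1 h).2
    · intro Q hQ h1 h2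
      exact (refines_iff hQ.1 hM).2 fun x y h => (same_common x y).2
        ⟨(refines_iff hQ.1 hA.1).1 h1 x y h, (refines_iff hQ.1 hB.1).1 h2 x y h⟩
  · let F : Set (Set (Set V)) := {Q | ValidCoarsening E Q ∧ Refines PA Q ∧ Refines PB Q}
    let r : Setoid V :=
      { r := fun x y => ∀ Q ∈ F, SameP Q x y
        iseqv := ⟨fun x Q hQ => SameP.refl hQ.1.1 x, fun h Q hQ => (h Q hQ).symm,
          fun h h' Q hQ => (h Q hQ).trans hQ.1.1 (h' Q hQ)⟩ }
    have hJ : Setoid.IsPartition r.classes := Setoid.isPartition_classes r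
    have hs : ∀ x y, SameP r.classes x y ↔ ∀ Q ∈ F, SameP Q x y := fun x y =>
      (Setoid.rel_iff_exists_classes r).symm
    refine ⟨r.classes, valid_of_inf F hJ (fun Q hQ => hQ.1) hs, ?_, ?_, ?_⟩
    · exact (refines_iff hA.1 hJ).2 fun x y h => (hs x y).2 fun Q hQ =>
        (refines_iff hA.1 hQ.1.1).1 hQ.2.1 x y h
    · exact (refines_iff hB.1 hJ).2 fun x y h => (hs x y).2 fun Q hQ =>
        (refines_iff hB.1 hQ.1.1).1 hQ.2.2 x y h
    · intro Q hQ h1 h2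
      exact (refines_iff hJ hQ.1).2 fun x y h => (hs x y).1 h Q ⟨hQ, h1, h2⟩
  · exact valid_iff.2 ⟨partition_univ, fun x y _ _ => ⟨Set.univ, rfl, trivial, trivial⟩⟩
  · exact fun P _ π _ => ⟨Set.univ, rfl, Set.subset_univ π⟩
end

section
/- Let G = (V,E) be a finite DAG, let Π be a valid coarsening partition of G, and let π ∈ Π. If (v_0, v_1, …, v_m) is a directed path in G (v_{i} → v_{i+1} ∈ E for every i) with v_0 ∈ π and v_m ∈ π, then v_i ∈ π for every i; that is, every part of a valid coarsening partition is convex with respect to directed paths. -/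
/-- every part of a valid coarsening partition of a finite DAG is convex
with respect to directed paths: if a directed path starts and ends in a part `π`,
then all of its nodes lie in `π`. -/
theorem validCoarsening_part_convex
    {V : Type*} [Fintype V] (E : V → V → Prop)
    (hacyc : ∀ v, ¬ Relation.TransGen E v v)
    (P : Set (Set V)) (hP : ValidCoarsening E P)
    (π : Set V) (hπ : π ∈ P)
    (m : ℕ) (v : ℕ → V)
    (hpath : ∀ i < m, E (v i) (v (i + 1)))
    (h0 : v 0 ∈ π) (hm : v m ∈ π) :
    ∀ i ≤ m, v i ∈ π := by
  obtain ⟨⟨_, hpart⟩, hac⟩ := hP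
  choose c hc huniq using fun x : V => hpart x
  have hcP : ∀ x, c x ∈ P := fun x => (hc x).1
  have hcm : ∀ x, x ∈ c x := fun x => (hc x).2
  have hu : ∀ x (s : Set V), s ∈ P → x ∈ s → s = c x :=
    fun x s h1 h2 => huniq x s ⟨h1, h2⟩
  have step : ∀ i < m,
      Relation.ReflTransGen (QuotRel E P) (c (v i)) (c (v (i + 1))) := by
    intro i hi
    by_cases h : c (v i) = c (v (i + 1))
    · rw [h]
    · exact Relation.ReflTransGen.single
        ⟨hcP _, hcP _, h, v i, hcm _, v (i + 1), hcm _, hpath i hi⟩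
  have reach : ∀ i k, i + k ≤ m →
      Relation.ReflTransGen (QuotRel E P) (c (v i)) (c (v (i + k))) := by
    intro i k
    induction k with
    | zero => intro _; exact Relation.ReflTransGen.refl
    | succ k ih =>
      intro hk
      exact (ih (by omega)).trans (step (i + k) (by omega))
  intro i hi
  have h1 := reach 0 i (by omega)
  have h2 := reach i (m - i) (by omega)
  rw [Nat.zero_add, ← hu _ _ hπ h0] at h1
  rw [Nat.add_sub_cancel' hi, ← hu _ _ hπ hm] at h2
  rcases Relation.reflTransGen_iff_eq_or_transGen.1 h1 with h | h
  · rw [← h]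
    exact hcm _
  · exact absurd (h.trans_left h2) (hac π)
end

section
/- Let G = (V,E) be a finite DAG, let Π and Π* be valid coarsening partitions of G with Π* refining Π, and let π ∈ Π be a part that is the union π = ρ_1 ∪ … ∪ ρ_m of parts ρ_1, …, ρ_m ∈ Π* with m ≥ 2. Suppose ρ_1 is a source of the induced quotient subgraph on {ρ_1, …, ρ_m}, i.e., there is no edge v → w ∈ E with v ∈ ρ_j for some j ≥ 2 and w ∈ ρ_1. Then an_G(ρ_1) ∩ (π \ ρ_1) = ∅. -/
theorem quot_path {V : Type*} (E : V → V → Prop) (P : Set (Set V))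
    (hP : Setoid.IsPartition P) {x y : V} (h : Relation.ReflTransGen E x y) :
    ∀ A ∈ P, x ∈ A → ∀ B ∈ P, y ∈ B → Relation.ReflTransGen (QuotRel E P) A B := by
  induction h with
  | refl =>
    intro A hA hx B hB hy
    rw [(hP.2 x).unique ⟨hA, hx⟩ ⟨hB, hy⟩]
  | @tail b c _ hbc ih =>
    intro A hA hx B hB hy
    obtain ⟨C, ⟨hC, hb⟩, _⟩ := hP.2 b
    have h1 := ih A hA hx C hC hb
    by_cases hCB : C = B
    · rw [← hCB]; exact h1
    · exact h1.tail ⟨hC, hB, hCB, b, hb, c, hy, hbc⟩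

theorem part_convex {V : Type*} (E : V → V → Prop) (P : Set (Set V))
    (hP : ValidCoarsening E P) {x y z : V} (h : Relation.ReflTransGen E x y)
    (h' : Relation.ReflTransGen E y z) (A : Set V) (hA : A ∈ P) (hx : x ∈ A) (hz : z ∈ A) :
    y ∈ A := by
  obtain ⟨B, ⟨hB, hy⟩, _⟩ := hP.1.2 y
  have h1 := quot_path E P hP.1 h A hA hx B hB hy
  have h2 := quot_path E P hP.1 h' B hB hy A hA hz
  rcases Relation.reflTransGen_iff_eq_or_transGen.1 h1 with h3 | h3
  · rw [← h3]; exact hy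
  · exact absurd (h3.trans_left h2) (hP.2 A)

/-- let `Π` and `Π*` be valid coarsening partitions of a finite DAG with
`Π*` refining `Π`, and let `π ∈ Π` be the union of parts `ρ ⟨0, by omega⟩, …, ρ (m-1)` of `Π*`
(with `m ≥ 2`). If `ρ ⟨0, by omega⟩` is a source of the induced quotient subgraph on these parts
(no edge of `G` goes from some `ρ j`, `j ≠ 0`, into `ρ ⟨0, by omega⟩`), then no node of
`π \ ρ ⟨0, by omega⟩` is an ancestor of `ρ ⟨0, by omega⟩`. -/
theorem source_part_no_ancestors_in_rest
    {V : Type*} [Fintype V] (E : V → V → Prop)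
    (hacyc : ∀ v, ¬ Relation.TransGen E v v)
    (P Pstar : Set (Set V))
    (hP : ValidCoarsening E P) (hPstar : ValidCoarsening E Pstar)
    (href : Refines Pstar P)
    (π : Set V) (hπ : π ∈ P)
    (m : ℕ) (hm : 2 ≤ m) (ρ : Fin m → Set V)
    (hρ : ∀ j, ρ j ∈ Pstar) (hρinj : Function.Injective ρ)
    (hunion : π = ⋃ j, ρ j)
    (hsource : ∀ j : Fin m, (j : ℕ) ≠ 0 → ∀ v ∈ ρ j, ∀ w ∈ ρ ⟨0, by omega⟩, ¬ E v w) :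
    {u : V | ∃ w ∈ ρ ⟨0, by omega⟩, Relation.ReflTransGen E u w} ∩ (π \ ρ ⟨0, by omega⟩) = ∅ := by
  ext u
  simp only [Set.mem_inter_iff, Set.mem_setOf_eq, Set.mem_diff, Set.mem_empty_iff_false, iff_false]
  rintro ⟨⟨w, hw, huw⟩, huπ, hu⟩
  apply hu
  clear hu
  have hwπ : w ∈ π := by rw [hunion]; exact Set.mem_iUnion.2 ⟨_, hw⟩
  revert huπ
  induction huw using Relation.ReflTransGen.head_induction_on with
  | refl => intro _; exact hw
  | @head a c hac hcw ih =>
    intro ha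
    have hc := ih (part_convex E P hP (Relation.ReflTransGen.single hac) hcw π hπ ha hwπ)
    rw [hunion] at ha
    obtain ⟨j, hj⟩ := Set.mem_iUnion.1 ha
    by_cases h0 : (j : ℕ) = 0
    · have : j = ⟨0, by omega⟩ := Fin.ext h0
      rw [← this]; exact hj
    · exact absurd hac (hsource j h0 a hj c hc)
end

section
/- Let G = (V,E) be a finite DAG, let Π and Π* be valid coarsening partitions of G with Π* refining Π, and let π ∈ Π be a part that is the union π = ρ_1 ∪ … ∪ ρ_m of parts ρ_1, …, ρ_m ∈ Π* with m ≥ 2. Suppose ρ_1 is a source of the induced quotient subgraph on {ρ_1, …, ρ_m}, i.e., there is no edge v → w ∈ E with v ∈ ρ_j for some j ≥ 2 and w ∈ ρ_1. Then the partition (Π \ {π}) ∪ {ρ_1, π \ ρ_1}, obtained from Π by splitting the part π into ρ_1 and π \ ρ_1, is again a valid coarsening partition of G. -/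
theorem split_aux {V : Type*} (E : V → V → Prop) (P : Set (Set V))
    (hP : ValidCoarsening E P) (π A B : Set V) (hπ : π ∈ P)
    (hA : A.Nonempty) (hB : B.Nonempty) (hAB : ∀ x, x ∈ A → x ∉ B)
    (hU : ∀ x, x ∈ π ↔ x ∈ A ∨ x ∈ B)
    (hE : ∀ v ∈ B, ∀ w ∈ A, ¬ E v w) :
    ValidCoarsening E ((P \ {π}) ∪ {A, B}) := by
  classical
  obtain ⟨⟨hne, hpart⟩, hac⟩ := hP
  have hABne : A ≠ B := by
    rintro rfl
    obtain ⟨x, hx⟩ := hA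
    exact hAB x hx hx
  refine ⟨⟨?_, ?_⟩, ?_⟩
  · rintro (h | h | h)
    · exact hne h.1
    · exact hA.ne_empty h.symm
    · exact hB.ne_empty (Set.mem_singleton_iff.1 h).symm
  · intro a
    obtain ⟨b, ⟨hb, hab⟩, huniq⟩ := hpart a
    by_cases hbπ : b = π
    · subst hbπ
      have key : ∀ y, y ∈ P \ {b} → a ∉ y := fun y hy hay => hy.2 (huniq y ⟨hy.1, hay⟩)
      rcases (hU a).1 hab with h | h
      · refine ⟨A, ⟨by simp, h⟩, ?_⟩
        rintro y ⟨hy | hy | hy, hay⟩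
        · exact (key y hy hay).elim
        · exact hy
        · rw [Set.mem_singleton_iff.1 hy] at hay
          exact (hAB a h hay).elim
      · refine ⟨B, ⟨by simp, h⟩, ?_⟩
        rintro y ⟨hy | hy | hy, hay⟩
        · exact (key y hy hay).elim
        · rw [hy] at hay
          exact (hAB a hay h).elim
        · exact hy
    · have haπ : a ∉ π := fun h => hbπ (huniq π ⟨hπ, h⟩).symm
      refine ⟨b, ⟨Or.inl ⟨hb, hbπ⟩, hab⟩, ?_⟩
      rintro y ⟨hy | hy | hy, hay⟩
      · exact huniq y ⟨hy.1, hay⟩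
      · rw [hy] at hay
        exact (haπ ((hU a).2 (Or.inl hay))).elim
      · rw [Set.mem_singleton_iff.1 hy] at hay
        exact (haπ ((hU a).2 (Or.inr hay))).elim
  · let f : Set V → Set V := fun X => if X = A ∨ X = B then π else X
    have fA : f A = π := by simp [f]
    have fB : f B = π := by simp [f]
    have hmem : ∀ X ∈ (P \ {π}) ∪ {A, B}, f X ∈ P ∧ X ⊆ f X := by
      intro X hX
      by_cases h : X = A ∨ X = B
      · have : f X = π := if_pos h
        rw [this]
        refine ⟨hπ, fun x hx => (hU x).2 ?_⟩
        rcases h with rfl | rfl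
        · exact Or.inl hx
        · exact Or.inr hx
      · have h2 : f X = X := if_neg h
        rw [h2]
        rcases hX with hX | hX
        · exact ⟨hX.1, subset_rfl⟩
        · exact (h hX).elim
    have step : ∀ x y, QuotRel E ((P \ {π}) ∪ {A, B}) x y →
        QuotRel E P (f x) (f y) ∨ (x = A ∧ y = B) := by
      rintro x y ⟨hx, hy, hxy, v, hv, w, hw, hvw⟩
      by_cases hf : f x = f y
      · right
        by_cases h1 : x = A ∨ x = B
        · by_cases h2 : y = A ∨ y = B
          · rcases h1 with rfl | rfl <;> rcases h2 with rfl | rfl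
            · exact (hxy rfl).elim
            · exact ⟨rfl, rfl⟩
            · exact (hE v hv w hw hvw).elim
            · exact (hxy rfl).elim
          · have e1 : f x = π := if_pos h1
            have e2 : f y = y := if_neg h2
            rcases hy with hy | hy
            · exact (hy.2 (e2.symm.trans (hf.symm.trans e1))).elim
            · exact (h2 hy).elim
        · have e1 : f x = x := if_neg h1
          by_cases h2 : y = A ∨ y = B
          · have e2 : f y = π := if_pos h2
            rcases hx with hx | hx
            · exact (hx.2 (e1.symm.trans (hf.trans e2))).elim
            · exact (h1 hx).elim
          · have e2 : f y = y := if_neg h2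
            exact (hxy (e1.symm.trans (hf.trans e2))).elim
      · exact Or.inl ⟨(hmem x hx).1, (hmem y hy).1, hf, v, (hmem x hx).2 hv,
          w, (hmem y hy).2 hw, hvw⟩
    have main : ∀ x y, Relation.TransGen (QuotRel E ((P \ {π}) ∪ {A, B})) x y →
        Relation.TransGen (QuotRel E P) (f x) (f y) ∨ (x = A ∧ y = B) := by
      intro x y h
      induction h with
      | single h => exact (step _ _ h).imp_left Relation.TransGen.single
      | tail _ h ih =>
        rcases ih with ih | ⟨rfl, rfl⟩
        · rcases step _ _ h with h | ⟨rfl, rfl⟩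
          · exact Or.inl (ih.tail h)
          · left
            rw [fB, ← fA]
            exact ih
        · rcases step _ _ h with h | ⟨h, -⟩
          · left
            rw [fA, ← fB]
            exact Relation.TransGen.single h
          · exact (hABne h.symm).elim
    intro x h
    rcases main x x h with h | ⟨h1, h2⟩
    · exact hac _ h
    · exact hABne (h1.symm.trans h2)

/-- let `Π` and `Π*` be valid coarsening partitions of a finite DAG with
`Π*` refining `Π`, and let `π ∈ Π` be the union of parts `ρ 0, …, ρ (m-1)` of `Π*`
(with `m ≥ 2`), where `ρ 0` is a source of the induced quotient subgraph on these parts.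
Then the partition obtained from `Π` by splitting `π` into `ρ 0` and `π \ ρ 0` is
again a valid coarsening partition. -/
theorem split_at_source_validCoarsening
    {V : Type*} [Fintype V] (E : V → V → Prop)
    (hacyc : ∀ v, ¬ Relation.TransGen E v v)
    (P Pstar : Set (Set V))
    (hP : ValidCoarsening E P) (hPstar : ValidCoarsening E Pstar)
    (href : Refines Pstar P)
    (π : Set V) (hπ : π ∈ P)
    (m : ℕ) (hm : 2 ≤ m) (ρ : Fin m → Set V)
    (hρ : ∀ j, ρ j ∈ Pstar) (hρinj : Function.Injective ρ)
    (hunion : π = ⋃ j, ρ j)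
    (hsource : ∀ j : Fin m, (j : ℕ) ≠ 0 → ∀ v ∈ ρ j, ∀ w ∈ ρ ⟨0, by omega⟩, ¬ E v w) :
    ValidCoarsening E ((P \ {π}) ∪ {ρ ⟨0, by omega⟩, π \ ρ ⟨0, by omega⟩}) := by
  have hdisj : ∀ i j x, x ∈ ρ i → x ∈ ρ j → i = j := fun i j x hi hj =>
    hρinj ((hPstar.1.2 x).unique ⟨hρ i, hi⟩ ⟨hρ j, hj⟩)
  have hne : ∀ i, (ρ i).Nonempty := fun i => by
    rw [Set.nonempty_iff_ne_empty]
    intro h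
    exact hPstar.1.1 (h ▸ hρ i)
  have hsub : ∀ j, ρ j ⊆ π := fun j => hunion ▸ Set.subset_iUnion ρ j
  refine split_aux E P hP π _ _ hπ (hne _) ?_ (fun x hx hx2 => hx2.2 hx) ?_ ?_
  · obtain ⟨x, hx⟩ := hne ⟨1, by omega⟩
    refine ⟨x, hsub _ hx, fun h => ?_⟩
    have := hdisj _ _ x hx h
    simp at this
  · intro x
    constructor
    · intro h
      by_cases h0 : x ∈ ρ ⟨0, by omega⟩
      · exact Or.inl h0
      · exact Or.inr ⟨h, h0⟩
    · rintro (h | h)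
      · exact hsub _ h
      · exact h.1
  · rintro v ⟨hv, hv0⟩ w hw
    rw [hunion] at hv
    obtain ⟨j, hj⟩ := Set.mem_iUnion.1 hv
    refine hsource j (fun h => hv0 ?_) v hj w hw
    have : j = ⟨0, by omega⟩ := Fin.ext h
    exact this ▸ hj
end

section
/- Let G = (V,E) be a finite DAG and let Π* be any valid coarsening partition of G with k parts. Then there exists a chain of partitions Π_0, Π_1, …, Π_{k-1} such that Π_0 = {V} is the one-part partition, Π_{k-1} = Π*, each Π_{t+1} is obtained from Π_t by splitting exactly one part into two nonempty parts, each Π_t is a valid coarsening partition of G, and each Π_t is refined by Π* (every part of Π_t is a union of parts of Π*). -/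
/-- `Q` is obtained from `P` by splitting exactly one part into two nonempty parts. -/
def SplitsInto {V : Type*} (P Q : Set (Set V)) : Prop :=
  ∃ π ∈ P, ∃ a b : Set V, a.Nonempty ∧ b.Nonempty ∧ Disjoint a b ∧ a ∪ b = π ∧
    Q = (P \ {π}) ∪ {a, b}

/-- The partition of `V` into the nonempty fibers of `f`. -/
def fiberParts {V : Type*} (f : V → ℕ) : Set (Set V) :=
  {s | ∃ v, s = {w | f w = f v}}

theorem fiberParts_valid {V : Type*} (E : V → V → Prop) (f : V → ℕ)
    (hf : ∀ v w, E v w → f v ≤ f w) : ValidCoarsening E (fiberParts f) := by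
  refine ⟨⟨?_, ?_⟩, ?_⟩
  · rintro ⟨v, hv⟩
    have : v ∈ (∅ : Set V) := by rw [hv]; rfl
    exact this
  · intro v
    refine ⟨{w | f w = f v}, ⟨⟨v, rfl⟩, rfl⟩, ?_⟩
    rintro _ ⟨⟨u, rfl⟩, hu⟩
    have hu' : f v = f u := hu
    ext w
    simp [hu']
  · have step : ∀ π ρ, QuotRel E (fiberParts f) π ρ → ∀ v ∈ π, ∀ w ∈ ρ, f v < f w := by
      rintro _ _ ⟨⟨a, rfl⟩, ⟨b, rfl⟩, hne, v, hv, w, hw, hE⟩ x hx y hy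
      simp only [Set.mem_ofPred_eq] at hv hw hx hy
      have h1 := hf v w hE
      have h2 : f a ≠ f b := by
        intro h
        apply hne
        rw [h]
      omega
    have key : ∀ π ρ, Relation.TransGen (QuotRel E (fiberParts f)) π ρ →
        ∀ v ∈ π, ∀ w ∈ ρ, f v < f w := by
      intro π ρ h
      induction h with
      | single h => exact step _ _ h
      | tail h1 h2 ih =>
        intro v hv w hw
        obtain ⟨-, -, -, x, hx, -⟩ := id h2
        exact (ih v hv x hx).trans (step _ _ h2 x hx w hw)
    intro π h
    have : ∃ v, v ∈ π := by
      cases h with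
      | single h => exact ⟨_, h.2.2.2.choose_spec.2.choose_spec.1⟩
      | tail _ h => exact ⟨_, h.2.2.2.choose_spec.2.choose_spec.1⟩
    obtain ⟨v, hv⟩ := this
    exact lt_irrefl _ (key _ _ h v hv v hv)

theorem fiberParts_split {V : Type*} (c : V → ℕ) (t : ℕ) (h0 : ∃ v, c v = t)
    (h1 : ∃ v, c v = t + 1) :
    SplitsInto (fiberParts fun v => min (c v) t) (fiberParts fun v => min (c v) (t + 1)) := by
  obtain ⟨x, hx⟩ := h0
  obtain ⟨y, hy⟩ := h1
  refine ⟨{w | t ≤ c w}, ⟨x, ?_⟩, {w | c w = t}, {w | t + 1 ≤ c w}, ⟨x, hx⟩, ⟨y, hy.ge⟩,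
    ?_, ?_, ?_⟩
  · ext w; simp [hx]
  · rw [Set.disjoint_left]
    intro w h1 h2
    simp only [Set.mem_ofPred_eq] at h1 h2
    omega
  · ext w
    simp only [Set.mem_union, Set.mem_ofPred_eq]
    omega
  · ext s
    constructor
    · rintro ⟨v, rfl⟩
      rcases lt_trichotomy (c v) t with h | h | h
      · left
        refine ⟨⟨v, ?_⟩, ?_⟩
        · ext w; simp only [Set.mem_ofPred_eq]; omega
        · intro h'
          have : x ∈ {w | min (c w) (t + 1) = min (c v) (t + 1)} := by
            rw [Set.mem_singleton_iff.1 h']; exact hx.ge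
          simp only [Set.mem_ofPred_eq] at this
          omega
      · right; left
        ext w; simp only [Set.mem_ofPred_eq]; omega
      · right; right
        ext w; simp only [Set.mem_ofPred_eq]; omega
    · rintro (⟨⟨v, rfl⟩, hne⟩ | rfl | rfl)
      · have hv : c v < t := by
          by_contra hv
          apply hne
          ext w
          simp only [Set.mem_ofPred_eq]; omega
        refine ⟨v, ?_⟩
        ext w; simp only [Set.mem_ofPred_eq]; omega
      · refine ⟨x, ?_⟩
        ext w; simp only [Set.mem_ofPred_eq]; omega
      · refine ⟨y, ?_⟩
        ext w; simp only [Set.mem_ofPred_eq]; omega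

/-- Topological numbering of an acyclic relation on a finite type. -/
theorem exists_topo {α : Type*} [Finite α] (r : α → α → Prop)
    (h : ∀ a, ¬ Relation.TransGen r a a) :
    ∃ g : α ≃ Fin (Nat.card α), ∀ a b, r a b → g a ≤ g b := by
  letI : PartialOrder α :=
    { le := Relation.ReflTransGen r
      le_refl := fun a => Relation.ReflTransGen.refl
      le_trans := fun a b c => Relation.ReflTransGen.trans
      le_antisymm := fun a b hab hba => by
        rcases Relation.reflTransGen_iff_eq_or_transGen.1 hab with e | e
        · exact e.symm
        · exact absurd (e.trans_left hba) (h a) }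
  letI : Fintype (LinearExtension α) := @Fintype.ofFinite _ (inferInstanceAs (Finite α))
  have hc : Fintype.card (LinearExtension α) = Nat.card α := by
    rw [← Nat.card_eq_fintype_card]; rfl
  let g := (Fintype.orderIsoFinOfCardEq (LinearExtension α) hc).symm
  refine ⟨g.toEquiv, fun a b hab => ?_⟩
  have h1 : a ≤ b := Relation.ReflTransGen.single hab
  exact g.monotone (toLinearExtension.monotone h1)

/-- for any valid coarsening partition `Π*` of a finite DAG with `k` parts,
there is a chain `Π_0 = {V}, Π_1, …, Π_{k-1} = Π*` in which each `Π_{t+1}` is obtained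
from `Π_t` by splitting one part in two, each `Π_t` is a valid coarsening partition,
and each `Π_t` is refined by `Π*`. -/
theorem chain_of_splits_to_valid_coarsening
    {V : Type*} [Fintype V] [Nonempty V] (E : V → V → Prop)
    (hacyc : ∀ v, ¬ Relation.TransGen E v v)
    (Pstar : Set (Set V)) (hPstar : ValidCoarsening E Pstar)
    (k : ℕ) (hk : Pstar.ncard = k) :
    ∃ P : ℕ → Set (Set V),
      P 0 = {Set.univ} ∧
      P (k - 1) = Pstar ∧
      (∀ t < k - 1, SplitsInto (P t) (P (t + 1))) ∧
      (∀ t ≤ k - 1, ValidCoarsening E (P t)) ∧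
      (∀ t ≤ k - 1, Refines Pstar (P t)) := by
  classical
  obtain ⟨⟨hne, hpart⟩, hac⟩ := id hPstar
  obtain ⟨g, hg⟩ := exists_topo (α := Pstar) (fun a b => QuotRel E Pstar a b) (by
    intro a h
    exact hac a (Relation.TransGen.lift (fun x : Pstar => (x : Set V)) (fun _ _ h => h) _ _ h))
  have hcard : Nat.card Pstar = k := by rw [← hk]; rfl
  choose p hp hpu using hpart
  have hpm : ∀ v, p v ∈ Pstar := fun v => (hp v).1
  have hpv : ∀ v, v ∈ p v := fun v => (hp v).2
  have hpe : ∀ v, ∀ s ∈ Pstar, v ∈ s → s = p v := fun v s hs hv => hpu v s ⟨hs, hv⟩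
  let c : V → ℕ := fun v => (g ⟨p v, hpm v⟩ : ℕ)
  have hclt : ∀ v, c v < k := fun v => lt_of_lt_of_eq (g ⟨p v, hpm v⟩).2 hcard
  have hceq : ∀ v w, c v = c w ↔ p v = p w := by
    intro v w
    constructor
    · intro h
      have := g.injective (Fin.ext h)
      exact congrArg Subtype.val this
    · intro h
      simp only [c, h]
  have hfib : ∀ v, {w | c w = c v} = p v := by
    intro v
    ext w
    simp only [Set.mem_ofPred_eq, hceq]
    exact ⟨fun h => h ▸ hpv w, fun h => (hpe w _ (hpm v) h).symm⟩
  have hsurj : ∀ t < k, ∃ v, c v = t := by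
    intro t ht
    obtain ⟨s, hs⟩ := g.surjective ⟨t, hcard ▸ ht⟩
    obtain ⟨v, hv⟩ : (s : Set V).Nonempty := by
      rw [Set.nonempty_iff_ne_empty]
      intro h
      exact hne (h ▸ s.2)
    refine ⟨v, ?_⟩
    have : (⟨p v, hpm v⟩ : Pstar) = s := Subtype.ext (hpe v s s.2 hv).symm
    simp only [c, this, hs]
  have hmono : ∀ v w, E v w → c v ≤ c w := by
    intro v w h
    by_cases e : p v = p w
    · exact ((hceq v w).2 e).le
    · exact hg ⟨p v, hpm v⟩ ⟨p w, hpm w⟩ ⟨hpm v, hpm w, e, v, hpv v, w, hpv w, h⟩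
  refine ⟨fun t => fiberParts fun v => min (c v) t, ?_, ?_, ?_, ?_, ?_⟩
  · ext s
    simp [fiberParts]
  · have e : (fun v => min (c v) (k - 1)) = c := by
      funext v
      have := hclt v
      omega
    simp only [e]
    ext s
    constructor
    · rintro ⟨v, rfl⟩
      rw [hfib]; exact hpm v
    · intro hs
      obtain ⟨v, hv⟩ : s.Nonempty := by
        rw [Set.nonempty_iff_ne_empty]
        intro h
        exact hne (h ▸ hs)
      exact ⟨v, by rw [hfib]; exact hpe v s hs hv⟩
  · intro t ht
    exact fiberParts_split c t (hsurj t (by omega)) (hsurj (t + 1) (by omega))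
  · intro t _
    exact fiberParts_valid E _ fun v w h => min_le_min_right t (hmono v w h)
  · intro t _ s hs
    obtain ⟨v, hv⟩ : s.Nonempty := by
      rw [Set.nonempty_iff_ne_empty]
      intro h
      exact hne (h ▸ hs)
    refine ⟨_, ⟨v, rfl⟩, ?_⟩
    intro w hw
    have : c w = c v := (hceq w v).2 ((hpe w s hs hw).symm.trans (hpe v s hs hv))
    simp only [Set.mem_ofPred_eq, this]
end

section
/- Let G = (V,E) be a finite DAG and let 𝓘 be a collection of subsets of V (intervention target sets), with ian_G(v) = an_G(v) ∩ ⋃_{I∈𝓘} I. Then the partition of V into equivalence classes of the relation v ∼ w ⟺ ian_G(v) = ian_G(w) is a valid coarsening partition of G; that is, the quotient graph over these classes, with an edge between distinct classes π → ρ whenever some v ∈ π and w ∈ ρ satisfy v → w ∈ E, is acyclic. -/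
/-- The intervened ancestors of `v`: ancestors of `v` (including `v` itself) that belong
to some intervention target set in the collection `𝓘`. -/
def IntervenedAncestors {V : Type*} (E : V → V → Prop) (𝓘 : Set (Set V)) (v : V) : Set V :=
  {u | Relation.ReflTransGen E u v} ∩ ⋃₀ 𝓘

/-- the partition of `V` into equivalence classes of
`v ∼ w ↔ ian_G(v) = ian_G(w)` is a valid coarsening partition of the finite DAG `G`:
it is a partition and its quotient graph is acyclic. -/
theorem interventionalCoarsening_valid
    {V : Type*} [Fintype V] (E : V → V → Prop)
    (hacyc : ∀ v, ¬ Relation.TransGen E v v)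
    (𝓘 : Set (Set V)) :
    ValidCoarsening E
      {s : Set V | ∃ v : V,
        s = {w : V | IntervenedAncestors E 𝓘 w = IntervenedAncestors E 𝓘 v}} := by
  refine ⟨⟨?_, ?_⟩, ?_⟩
  · rintro ⟨v, hv⟩
    have : v ∈ (∅ : Set V) := by rw [hv]; exact rfl
    exact this
  · intro a
    refine ⟨{w : V | IntervenedAncestors E 𝓘 w = IntervenedAncestors E 𝓘 a},
      ⟨⟨a, rfl⟩, rfl⟩, ?_⟩
    rintro s ⟨⟨v, rfl⟩, ha⟩
    have ha' : IntervenedAncestors E 𝓘 a = IntervenedAncestors E 𝓘 v := ha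
    simp only [ha']
  · have key : ∀ π ρ, Relation.TransGen (QuotRel E {s : Set V | ∃ v : V,
        s = {w : V | IntervenedAncestors E 𝓘 w = IntervenedAncestors E 𝓘 v}}) π ρ →
        ∃ v w, π = {x : V | IntervenedAncestors E 𝓘 x = IntervenedAncestors E 𝓘 v} ∧
          ρ = {x : V | IntervenedAncestors E 𝓘 x = IntervenedAncestors E 𝓘 w} ∧
          IntervenedAncestors E 𝓘 v ⊂ IntervenedAncestors E 𝓘 w := by
      have step : ∀ π ρ, QuotRel E {s : Set V | ∃ v : V,
          s = {w : V | IntervenedAncestors E 𝓘 w = IntervenedAncestors E 𝓘 v}} π ρ →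
          ∃ v w, π = {x : V | IntervenedAncestors E 𝓘 x = IntervenedAncestors E 𝓘 v} ∧
            ρ = {x : V | IntervenedAncestors E 𝓘 x = IntervenedAncestors E 𝓘 w} ∧
            IntervenedAncestors E 𝓘 v ⊂ IntervenedAncestors E 𝓘 w := by
        rintro π ρ ⟨⟨v, rfl⟩, ⟨w, rfl⟩, hne, a, ha, b, hb, hab⟩
        refine ⟨v, w, rfl, rfl, ?_⟩
        have ha' : IntervenedAncestors E 𝓘 a = IntervenedAncestors E 𝓘 v := ha
        have hb' : IntervenedAncestors E 𝓘 b = IntervenedAncestors E 𝓘 w := hb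
        refine LE.le.ssubset_of_ne ?_ ?_
        · rw [← ha', ← hb']
          exact fun x hx => ⟨Relation.ReflTransGen.tail hx.1 hab, hx.2⟩
        · intro h
          exact hne (by simp only [h])
      intro π ρ h
      induction h with
      | single h => exact step _ _ h
      | tail _ h ih =>
        obtain ⟨v, w, hv, hw, hvw⟩ := ih
        obtain ⟨w', u, hw', hu, hwu⟩ := step _ _ h
        refine ⟨v, u, hv, hu, hvw.trans ?_⟩
        have hmem : w ∈ {x : V | IntervenedAncestors E 𝓘 x = IntervenedAncestors E 𝓘 w'} := by
          rw [← hw', hw]; exact rfl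
        have e : IntervenedAncestors E 𝓘 w = IntervenedAncestors E 𝓘 w' := hmem
        rw [e]; exact hwu
    intro π h
    obtain ⟨v, w, hv, hw, hvw⟩ := key π π h
    have hmem : v ∈ {x : V | IntervenedAncestors E 𝓘 x = IntervenedAncestors E 𝓘 w} := by
      rw [← hw, hv]; exact rfl
    exact hvw.ne hmem
end

section
/- Let G = (V,E) be a finite DAG and define the maximal ancestors of a node v as ma_G(v) = {w ∈ an_G(v) : w has no parents in G}. Then the partition of V into equivalence classes of the relation v ∼ w ⟺ ma_G(v) = ma_G(w) is a valid coarsening partition of G; that is, the quotient graph over these classes, with an edge between distinct classes π → ρ whenever some v ∈ π and w ∈ ρ satisfy v → w ∈ E, is acyclic. -/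
/-- The maximal ancestors of `v`: ancestors of `v` (including `v` itself) that have
no parents in the DAG. -/
def MaximalAncestors {V : Type*} (E : V → V → Prop) (v : V) : Set V :=
  {w | Relation.ReflTransGen E w v ∧ ∀ u, ¬ E u w}

/-- the partition of `V` into equivalence classes of
`v ∼ w ↔ ma_G(v) = ma_G(w)` is a valid coarsening partition of the finite DAG `G`:
it is a partition and its quotient graph is acyclic. -/
theorem marginalCoarsening_valid
    {V : Type*} [Fintype V] (E : V → V → Prop)
    (hacyc : ∀ v, ¬ Relation.TransGen E v v) :
    ValidCoarsening E
      {s : Set V | ∃ v : V,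
        s = {w : V | MaximalAncestors E w = MaximalAncestors E v}} := by
  constructor
  · refine ⟨?_, ?_⟩
    · rintro ⟨v, hv⟩
      have h : v ∈ (∅ : Set V) := by
        rw [hv]
        exact rfl
      exact h
    · intro a
      refine ⟨{w : V | MaximalAncestors E w = MaximalAncestors E a}, ⟨⟨a, rfl⟩, rfl⟩, ?_⟩
      rintro s ⟨⟨v, rfl⟩, hs⟩
      have hs' : MaximalAncestors E a = MaximalAncestors E v := hs
      rw [hs']
  · have key : ∀ π ρ : Set V, Relation.TransGen (QuotRel E {s : Set V | ∃ v : V,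
        s = {w : V | MaximalAncestors E w = MaximalAncestors E v}}) π ρ →
        ∀ a ∈ π, ∀ b ∈ ρ, MaximalAncestors E a ⊂ MaximalAncestors E b := by
      intro π ρ h
      have step : ∀ π ρ : Set V, QuotRel E {s : Set V | ∃ v : V,
          s = {w : V | MaximalAncestors E w = MaximalAncestors E v}} π ρ →
          ∀ a ∈ π, ∀ b ∈ ρ, MaximalAncestors E a ⊂ MaximalAncestors E b := by
        rintro π ρ ⟨⟨x, rfl⟩, ⟨y, rfl⟩, hne, v, hv, w, hw, hvw⟩ a ha b hb
        simp only [Set.mem_setOf_eq] at hv hw ha hb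
        rw [ha, hb]
        refine lt_of_le_of_ne ?_ ?_
        · rw [← hv, ← hw]
          rintro u ⟨hu, hu'⟩
          exact ⟨hu.tail hvw, hu'⟩
        · intro he
          apply hne
          rw [he]
      induction h with
      | single h => exact step _ _ h
      | tail _ h ih =>
        intro a ha b hb
        obtain ⟨v, hv, -⟩ := h.2.2.2
        exact (ih a ha v hv).trans (step _ _ h v hv b hb)
    intro π h
    obtain ⟨ρ, hρ, -⟩ := Relation.TransGen.head'_iff.mp h
    obtain ⟨v, hv, -⟩ := hρ.2.2.2
    exact (key π π h v hv v hv).ne rfl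
end

section
/- Let G = (V,E) be a finite DAG with a coarsening G' = (V',E') given by surjection χ : V → V'. Let (X_v)_{v∈V} be random variables on a common probability space taking values in standard Borel spaces, and suppose the joint law is globally Markov to G, i.e., for all pairwise disjoint sets A, B, C ⊆ V such that A and B are d-separated given C in G, the random vectors X_A and X_B are conditionally independent given X_C. Then the joint law is globally Markov to G' with respect to the coarse variables: for all pairwise disjoint A', B', C' ⊆ V' such that A' and B' are d-separated given C' in G', the random vectors X_{χ⁻¹(A')} and X_{χ⁻¹(B')} are conditionally independent given X_{χ⁻¹(C')}. -/
open MeasureTheory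

/-- `f` and `g` are conditionally independent given `h` (under the measure `μ`): for all
measurable sets `s, t` in the respective codomains, the conditional expectation (given the
σ-algebra generated by `h`) of the indicator of `f ⁻¹' s ∩ g ⁻¹' t` agrees a.e. with the
product of the conditional expectations of the indicators of `f ⁻¹' s` and `g ⁻¹' t`. -/
def CondIndepGiven {Ω β γ δ : Type*} [MeasurableSpace Ω] [MeasurableSpace β]
    [MeasurableSpace γ] [MeasurableSpace δ]
    (μ : Measure Ω) (f : Ω → β) (g : Ω → γ) (h : Ω → δ) : Prop :=
  ∀ (s : Set β) (t : Set γ), MeasurableSet s → MeasurableSet t →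
    μ[(f ⁻¹' s ∩ g ⁻¹' t).indicator (fun _ => (1 : ℝ)) |
        MeasurableSpace.comap h inferInstance]
      =ᵐ[μ]
    μ[(f ⁻¹' s).indicator (fun _ => (1 : ℝ)) | MeasurableSpace.comap h inferInstance] *
    μ[(g ⁻¹' t).indicator (fun _ => (1 : ℝ)) | MeasurableSpace.comap h inferInstance]

namespace CoarseAux

def An {V : Type*} (E : V → V → Prop) (C : Set V) (x : V) : Prop :=
  ∃ c ∈ C, Relation.ReflTransGen E x c

/-- the walk may be extended at its head by an edge into the head -/
def exI {V : Type*} (E : V → V → Prop) (C : Set V) : List V → Prop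
  | x :: y :: _ => (E y x → An E C x) ∧ (¬ E y x → x ∉ C)
  | _ => True

/-- the walk may be extended at its head by an edge out of the head -/
def exO {V : Type*} (C : Set V) : List V → Prop
  | x :: _ :: _ => x ∉ C
  | _ => True

inductive Act {V : Type*} (E : V → V → Prop) (C : Set V) : List V → Prop
  | single (x : V) : Act E C [x]
  | inn (w x : V) (l : List V) : Act E C (x :: l) → E w x → exI E C (x :: l) → Act E C (w :: x :: l)
  | out (w x : V) (l : List V) : Act E C (x :: l) → E x w → exO C (x :: l) → Act E C (w :: x :: l)

variable {V : Type*} {E : V → V → Prop} {C : Set V}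

theorem act_of_index (has : ∀ x y, E x y → ¬ E y x) (p : List V) (hne : p ≠ [])
    (h1 : ∀ i, ∀ h : i + 1 < p.length,
      E (p[i]'(by omega)) (p[i + 1]'h) ∨ E (p[i + 1]'h) (p[i]'(by omega)))
    (h2 : ∀ i, ∀ h : i + 2 < p.length,
      ((E (p[i]'(by omega)) (p[i + 1]'(by omega)) ∧ E (p[i + 2]'h) (p[i + 1]'(by omega))) →
        ∃ c ∈ C, Relation.ReflTransGen E (p[i + 1]'(by omega)) c) ∧
      (¬ (E (p[i]'(by omega)) (p[i + 1]'(by omega)) ∧ E (p[i + 2]'h) (p[i + 1]'(by omega))) →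
        p[i + 1]'(by omega) ∉ C)) : Act E C p := by
  induction p with
  | nil => exact absurd rfl hne
  | cons w l ih =>
    cases l with
    | nil => exact .single w
    | cons x l =>
      have hA : Act E C (x :: l) := by
        refine ih (by simp) (fun i h => ?_) (fun i h => ?_)
        · exact h1 (i + 1) (by simpa using h)
        · exact h2 (i + 1) (by simpa using h)
      have e := h1 0 (by simp)
      simp only [List.getElem_cons_zero, List.getElem_cons_succ] at e
      cases l with
      | nil =>
        rcases e with e | e
        · exact .inn _ _ _ hA e trivial
        · exact .out _ _ _ hA e trivial
      | cons y l =>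
        have t := h2 0 (by simp)
        simp only [List.getElem_cons_zero, List.getElem_cons_succ] at t
        rcases e with e | e
        · exact .inn _ _ _ hA e ⟨fun h => t.1 ⟨e, h⟩, fun h => t.2 (fun h' => h h'.2)⟩
        · exact .out _ _ _ hA e (t.2 fun h => has _ _ e h.1)

theorem index_of_act (has : ∀ x y, E x y → ¬ E y x) (p : List V) (hp : Act E C p) :
    (∀ i, ∀ h : i + 1 < p.length,
      E (p[i]'(by omega)) (p[i + 1]'h) ∨ E (p[i + 1]'h) (p[i]'(by omega))) ∧
    (∀ i, ∀ h : i + 2 < p.length,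
      ((E (p[i]'(by omega)) (p[i + 1]'(by omega)) ∧ E (p[i + 2]'h) (p[i + 1]'(by omega))) →
        ∃ c ∈ C, Relation.ReflTransGen E (p[i + 1]'(by omega)) c) ∧
      (¬ (E (p[i]'(by omega)) (p[i + 1]'(by omega)) ∧ E (p[i + 2]'h) (p[i + 1]'(by omega))) →
        p[i + 1]'(by omega) ∉ C)) := by
  induction hp with
  | single x => exact ⟨fun i h => by simp at h, fun i h => by simp at h⟩
  | inn w x l hA e hx ih =>
    refine ⟨fun i h => ?_, fun i h => ?_⟩
    · cases i with
      | zero => exact Or.inl e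
      | succ i => exact ih.1 i (by simpa using h)
    · cases i with
      | zero =>
        cases l with
        | nil => simp at h
        | cons y l => exact ⟨fun h => hx.1 h.2, fun h => hx.2 fun h' => h ⟨e, h'⟩⟩
      | succ i => exact ih.2 i (by simpa using h)
  | out w x l hA e hx ih =>
    refine ⟨fun i h => ?_, fun i h => ?_⟩
    · cases i with
      | zero => exact Or.inr e
      | succ i => exact ih.1 i (by simpa using h)
    · cases i with
      | zero =>
        cases l with
        | nil => simp at h
        | cons y l => exact ⟨fun h => absurd h.1 (has _ _ e), fun _ => hx⟩
      | succ i => exact ih.2 i (by simpa using h)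

theorem Act.tail {x y : V} {l : List V} (h : Act E C (x :: y :: l)) : Act E C (y :: l) := by
  cases h <;> assumption

theorem Act.suffix {l : List V} {y : V} {r : List V} (h : Act E C (l ++ y :: r)) :
    Act E C (y :: r) := by
  induction l with
  | nil => exact h
  | cons a l ih =>
    apply ih
    cases l with
    | nil => exact h.tail
    | cons b l => exact h.tail

theorem An.of_reach {x y : V} (h : Relation.ReflTransGen E x y) (hy : An E C y) : An E C x := by
  obtain ⟨c, hc, h'⟩ := hy
  exact ⟨c, hc, h.trans h'⟩

/-- second node of the list points into the first -/
def hd (E : V → V → Prop) : List V → Prop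
  | x :: y :: _ => E y x
  | _ => False

theorem descent {y z : V} {r : List V} (hzy : E z y) (l : List V) (x : V)
    (h : Act E C (x :: (l ++ y :: z :: r))) :
    An E C y ∨ (Relation.ReflTransGen E y x ∧ hd E (x :: (l ++ y :: z :: r))) := by
  induction l generalizing x with
  | nil =>
    cases h with
    | inn _ _ _ hA e hx => exact Or.inl (hx.1 hzy)
    | out _ _ _ hA e hx => exact Or.inr ⟨.single e, e⟩
  | cons u l ih =>
    rcases ih u h.tail with h' | ⟨h1, h2⟩
    · exact Or.inl h'
    · cases h with
      | inn _ _ _ hA e hx =>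
        left
        refine An.of_reach h1 ?_
        cases l with
        | nil => exact hx.1 h2
        | cons b l => exact hx.1 h2
      | out _ _ _ hA e hx => exact Or.inr ⟨h1.tail e, e⟩

theorem exI_of {x : V} {l : List V} (h : An E C x) (h' : x ∉ C) : exI E C (x :: l) := by
  cases l with
  | nil => trivial
  | cons y l => exact ⟨fun _ => h, fun _ => h'⟩

theorem exO_of {x : V} {l : List V} (h' : x ∉ C) : exO C (x :: l) := by
  cases l with
  | nil => trivial
  | cons y l => exact h'

/-- truncation, edge `y → x` -/
theorem trunc_in {x y : V} {l r : List V} (h : Act E C (x :: (l ++ y :: r))) (e : E y x)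
    (hx : exI E C (x :: (l ++ y :: r))) (hy : y ∉ C) : exI E C (y :: r) := by
  cases r with
  | nil => trivial
  | cons z r =>
    refine ⟨fun hzy => ?_, fun _ => hy⟩
    rcases descent hzy l x h with h' | ⟨_, h2⟩
    · exact h'
    · refine An.of_reach (.single e) ?_
      cases l with
      | nil => exact hx.1 h2
      | cons b l => exact hx.1 h2

/-- truncation, edge `x → y` -/
theorem trunc_out {x y : V} {l r : List V} (h : Act E C (x :: (l ++ y :: r)))
    (hy : An E C y) : exI E C (y :: r) := by
  by_cases hc : y ∈ C
  · cases r with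
    | nil => trivial
    | cons z r =>
      refine ⟨fun _ => hy, fun hzy => ?_⟩
      have : ∃ u, Act E C (u :: y :: z :: r) := by
        rcases List.eq_nil_or_concat l with rfl | ⟨l', u, rfl⟩
        · exact ⟨x, h⟩
        · refine ⟨u, Act.suffix (l := x :: l') ?_⟩
          simpa using h
      obtain ⟨u, hu⟩ := this
      cases hu with
      | inn _ _ _ _ _ hx => exact hx.2 hzy
      | out _ _ _ _ _ hx => exact hx
  · exact exI_of hy hc

theorem exI_cons_in (has : ∀ x y, E x y → ¬ E y x) {w v : V} {l : List V} (e : E w v)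
    (h : exI E C (w :: v :: l)) : w ∉ C := h.2 (has _ _ e)

theorem main {V V' : Type*}
    {E : V → V → Prop} {E' : V' → V' → Prop}
    (has : ∀ x y, E x y → ¬ E y x) (has' : ∀ x y, E' x y → ¬ E' y x)
    (χ : V → V')
    (hE : ∀ v w, E v w → χ v ≠ χ w → E' (χ v) (χ w)) (C' : Set V')
    (b : V) (p : List V) (hp : Act E (χ ⁻¹' C') p) :
    ∀ v l, p = v :: l → p.getLast? = some b →
    ∃ q, Act E' C' (χ v :: q) ∧ (χ v :: q).Nodup ∧ (χ v :: q).getLast? = some (χ b) ∧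
      (exI E (χ ⁻¹' C') p → exI E' C' (χ v :: q)) ∧
      (exO (χ ⁻¹' C') p → exO C' (χ v :: q)) := by
  have hAn : ∀ v, An E (χ ⁻¹' C') v → An E' C' (χ v) := by
    rintro v ⟨c, hc, h⟩
    refine ⟨χ c, hc, ?_⟩
    clear hc
    induction h with
    | refl => exact .refl
    | @tail u w _ e ih =>
      by_cases huw : χ u = χ w
      · rwa [← huw]
      · exact ih.tail (hE _ _ e huw)
  induction hp with
  | single x =>
    intro v l h hb
    cases h
    refine ⟨[], .single _, by simp, by simpa using congrArg (Option.map χ) hb, fun _ => trivial, fun _ => trivial⟩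
  | inn w x l hA e hx ih =>
    intro v l' h hb
    cases h
    obtain ⟨q, q1, q2, q3, q4, q5⟩ := ih x l rfl (by simpa using hb)
    have hIn := q4 hx
    by_cases hwx : χ w = χ x
    · rw [hwx]
      exact ⟨q, q1, q2, q3, fun _ => hIn, fun h => exO_of (by rw [← hwx]; exact h)⟩
    · have e' := hE _ _ e hwx
      by_cases hm : χ w ∈ q
      · obtain ⟨l1, r, rfl⟩ := List.append_of_mem hm
        refine ⟨r, Act.suffix (l := χ x :: l1) (by simpa using q1), ?_, ?_, fun h => ?_, fun h => exO_of h⟩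
        · exact q2.sublist (List.IsSuffix.sublist ⟨χ x :: l1, by simp⟩)
        · rw [← q3, ← List.cons_append, List.getLast?_append_of_ne_nil _ (by simp)]
        · exact trunc_in q1 e' hIn (h.2 (has _ _ e))
      · refine ⟨χ x :: q, .inn _ _ _ q1 e' hIn, ?_, ?_, fun h => ⟨fun h' => absurd h' (has' _ _ e'), fun _ => h.2 (has _ _ e)⟩, fun h => h⟩
        · exact List.nodup_cons.2 ⟨by simp [hwx, hm], q2⟩
        · simpa using q3
  | out w x l hA e hx ih =>
    intro v l' h hb
    cases h
    obtain ⟨q, q1, q2, q3, q4, q5⟩ := ih x l rfl (by simpa using hb)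
    have hO := q5 hx
    by_cases hwx : χ w = χ x
    · rw [hwx]
      refine ⟨q, q1, q2, q3, fun h => ?_, fun h => hO⟩
      have := hAn _ (h.1 e)
      rw [hwx] at this
      cases q with
      | nil => trivial
      | cons y q => exact exI_of this hO
    · have e' := hE _ _ e (Ne.symm hwx)
      by_cases hm : χ w ∈ q
      · obtain ⟨l1, r, rfl⟩ := List.append_of_mem hm
        refine ⟨r, Act.suffix (l := χ x :: l1) (by simpa using q1), ?_, ?_, fun h => ?_, fun h => exO_of h⟩
        · exact q2.sublist (List.IsSuffix.sublist ⟨χ x :: l1, by simp⟩)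
        · rw [← q3, ← List.cons_append, List.getLast?_append_of_ne_nil _ (by simp)]
        · exact trunc_out q1 (hAn _ (h.1 e))
      · refine ⟨χ x :: q, .out _ _ _ q1 e' hO, ?_, ?_, fun h => ⟨fun _ => hAn _ (h.1 e), fun h' => absurd e' h'⟩, fun h => h⟩
        · exact List.nodup_cons.2 ⟨by simp [hwx, hm], q2⟩
        · simpa using q3

end CoarseAux

/-- if the joint law of random variables `(X_v)_{v ∈ V}`, taking values in
standard Borel spaces, is globally Markov to a finite DAG `G`, then it is globally Markov
to any coarsening `G'` of `G` with respect to the coarse variables `X_{χ⁻¹(·)}`. -/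
theorem coarsening_global_markov
    {V V' : Type*} [Fintype V] [Fintype V']
    (E : V → V → Prop) (E' : V' → V' → Prop)
    (hacyc : ∀ v, ¬ Relation.TransGen E v v)
    (hacyc' : ∀ x, ¬ Relation.TransGen E' x x)
    (χ : V → V') (hχ : Function.Surjective χ)
    (hE' : ∀ x y, E' x y ↔ ∃ v w, E v w ∧ χ v ≠ χ w ∧ χ v = x ∧ χ w = y)
    {Ω : Type*} [MeasurableSpace Ω] (μ : Measure Ω) [IsProbabilityMeasure μ]
    (S : V → Type*) [∀ v, MeasurableSpace (S v)] [∀ v, StandardBorelSpace (S v)]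
    (X : ∀ v, Ω → S v) (hX : ∀ v, Measurable (X v))
    (hMarkov : ∀ A B C : Set V,
      Disjoint A B → Disjoint A C → Disjoint B C → DSep E C A B →
      CondIndepGiven μ (fun ω => fun v : A => X v ω) (fun ω => fun v : B => X v ω)
        (fun ω => fun v : C => X v ω)) :
    ∀ A' B' C' : Set V',
      Disjoint A' B' → Disjoint A' C' → Disjoint B' C' → DSep E' C' A' B' →
      CondIndepGiven μ
        (fun ω => fun v : (χ ⁻¹' A' : Set V) => X v ω)
        (fun ω => fun v : (χ ⁻¹' B' : Set V) => X v ω)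
        (fun ω => fun v : (χ ⁻¹' C' : Set V) => X v ω) := by
  intro A' B' C' hAB hAC hBC hD
  refine hMarkov _ _ _ (hAB.preimage χ) (hAC.preimage χ) (hBC.preimage χ) ?_
  rintro a ha b hb ⟨haC, hbC, p, hlen, -, hh, hl, h1, h2⟩
  have has : ∀ x y, E x y → ¬ E y x := fun x y h h' => hacyc x (.tail (.single h) h')
  have has' : ∀ x y, E' x y → ¬ E' y x := fun x y h h' => hacyc' x (.tail (.single h) h')
  have hp := CoarseAux.act_of_index has p (by rintro rfl; simp at hlen) h1 h2
  obtain ⟨l, rfl⟩ : ∃ l, p = a :: l := by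
    cases p with
    | nil => simp at hlen
    | cons x l => exact ⟨l, by simp at hh; rw [hh]⟩
  obtain ⟨q, q1, q2, q3, -, -⟩ := CoarseAux.main has has' χ
    (fun v w e hne => (hE' _ _).2 ⟨v, w, e, hne, rfl, rfl⟩) C' b _ hp a l rfl hl
  have hne : χ a ≠ χ b := fun h => Set.disjoint_left.1 hAB ha (by rw [h]; exact hb)
  have hi := CoarseAux.index_of_act has' _ q1
  refine hD _ ha _ hb ⟨haC, hbC, χ a :: q, ?_, q2, rfl, q3, hi.1, hi.2⟩
  cases q with
  | nil => simp at q3; exact absurd q3 hne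
  | cons y q => simp
end
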